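/- Assume that v_1,…,v_m are all invertible in k. Then H_n(v_1,…,v_m;q) is a symmetric k-algebra: there exists a k-linear map tr : H_n → k such that tr(xy) = tr(yx) for all x, y ∈ H_n and such that the bilinear form (x,y) ↦ tr(xy) on H_n is nondegenerate. -/

import Mathlib

noncomputable section
open scoped Classical
open scoped Fin.NatCast

namespace Cyclo

/-- The defining relations of the cyclotomic Hecke algebra of type `G(m,1,n)`.
Generator `i : Fin n` corresponds to `a_{i+1}` of the paper. -/
inductive Rel (k : Type) [Field k] (m n : ℕ) (v : Fin m → k) (q : k) :
    FreeAlgebra k (Fin n) → FreeAlgebra k (Fin n) → Prop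
  | cyclo (i : Fin n) (hi : i.1 = 0) :
      Rel k m n v q
        ((List.ofFn fun j : Fin m =>
          (FreeAlgebra.ι k i - algebraMap k (FreeAlgebra k (Fin n)) (v j))).prod) 0
  | quad (i : Fin n) (hi : 1 ≤ i.1) :
      Rel k m n v q
        ((FreeAlgebra.ι k i - algebraMap k (FreeAlgebra k (Fin n)) q) * (FreeAlgebra.ι k i + 1)) 0
  | braid0 (i j : Fin n) (hi : i.1 = 0) (hj : j.1 = 1) :
      Rel k m n v q
        (FreeAlgebra.ι k i * FreeAlgebra.ι k j * FreeAlgebra.ι k i * FreeAlgebra.ι k j)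
        (FreeAlgebra.ι k j * FreeAlgebra.ι k i * FreeAlgebra.ι k j * FreeAlgebra.ι k i)
  | comm (i j : Fin n) (h : i.1 + 2 ≤ j.1) :
      Rel k m n v q (FreeAlgebra.ι k i * FreeAlgebra.ι k j)
        (FreeAlgebra.ι k j * FreeAlgebra.ι k i)
  | braid (i j : Fin n) (hi : 1 ≤ i.1) (hj : j.1 = i.1 + 1) :
      Rel k m n v q
        (FreeAlgebra.ι k j * FreeAlgebra.ι k i * FreeAlgebra.ι k j)
        (FreeAlgebra.ι k i * FreeAlgebra.ι k j * FreeAlgebra.ι k i)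

/-- The cyclotomic Hecke algebra `H_n(v_1,…,v_m;q)` of type `G(m,1,n)`. -/
def CH (k : Type) [Field k] (m n : ℕ) (v : Fin m → k) (q : k) : Type :=
  RingQuot (Rel k m n v q)

instance (k : Type) [Field k] (m n : ℕ) (v : Fin m → k) (q : k) : Ring (CH k m n v q) :=
  inferInstanceAs (Ring (RingQuot (Rel k m n v q)))

instance (k : Type) [Field k] (m n : ℕ) (v : Fin m → k) (q : k) : Algebra k (CH k m n v q) :=
  inferInstanceAs (Algebra k (RingQuot (Rel k m n v q)))

variable (k : Type) [Field k] (m n : ℕ) (v : Fin m → k) (q : k)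

/-- `gen k m n v q t` is the generator `a_{t+1}` (so `gen 0 = a_1`, …, `gen (n-1) = a_n`). -/
def gen [NeZero n] (t : ℕ) : CH k m n v q :=
  RingQuot.mkAlgHom k (Rel k m n v q) (FreeAlgebra.ι k ((t : Fin n)))

/-- `murphyAux k m n v q t` is the Murphy element `L_{t+1}`. -/
def murphyAux [NeZero n] : ℕ → CH k m n v q
  | 0 => gen k m n v q 0
  | t + 1 => q⁻¹ • (gen k m n v q (t + 1) * murphyAux t * gen k m n v q (t + 1))

/-- The Murphy element `L_{i+1}`, for `i : Fin n`. -/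
def murphy [NeZero n] (i : Fin n) : CH k m n v q := murphyAux k m n v q i.1

/-- The product of adjacent transpositions encoded by a list of `0`-based indices:
`t` encodes the transposition `(t, t+1)` (in `0`-based labels), i.e. `s_{t+1}` of the paper. -/
def swapProd [NeZero n] (l : List ℕ) : Equiv.Perm (Fin n) :=
  (l.map fun t => Equiv.swap ((t : Fin n)) (((t + 1 : ℕ) : Fin n))).prod

/-- The corresponding product of generators of the Hecke algebra: the index `t`
(encoding `s_{t+1}`) contributes the generator `a_{t+2} = gen (t+1)`. -/
def genProd [NeZero n] (l : List ℕ) : CH k m n v q :=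
  (l.map fun t => gen k m n v q (t + 1)).prod

/-- `l` is a reduced word for the permutation `w`. -/
def IsReducedWord [NeZero n] (l : List ℕ) (w : Equiv.Perm (Fin n)) : Prop :=
  (∀ t ∈ l, t + 1 < n) ∧ swapProd n l = w ∧
    ∀ l' : List ℕ, (∀ t ∈ l', t + 1 < n) → swapProd n l' = w → l.length ≤ l'.length

/-- `aw` assigns to each permutation `w` the element `a_w` computed from a(ny) reduced word. -/
def IsAW [NeZero n] (aw : Equiv.Perm (Fin n) → CH k m n v q) : Prop :=
  ∀ (w : Equiv.Perm (Fin n)) (l : List ℕ), IsReducedWord n l w → aw w = genProd k m n v q l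



/-- An `m`-multipartition of `n`:  `part c` is the partition `λ^{(c+1)}`
(so `c = m-1` corresponds to the component `λ^{(m)}` of the paper), given by its
(weakly decreasing) list of row lengths `part c 0, part c 1, …`. -/
structure Multipartition (m n : ℕ) where
  part : Fin m → ℕ → ℕ
  mono : ∀ c i, part c (i + 1) ≤ part c i
  bound : ∀ c i, n ≤ i → part c i = 0
  total : (∑ c : Fin m, ∑ i ∈ Finset.range n, part c i) = n

namespace Multipartition

variable {m n : ℕ}

/-- The size `|λ^{(c+1)}|` of a component. -/
def compSize (Λ : Multipartition m n) (c : Fin m) : ℕ :=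
  ∑ i ∈ Finset.range n, Λ.part c i

/-- `|λ^{(1)}| + ⋯ + |λ^{(kk)}|`. -/
def compSizeUpto (Λ : Multipartition m n) (kk : ℕ) : ℕ :=
  ∑ c ∈ Finset.range kk, (if h : c < m then Λ.compSize ⟨c, h⟩ else 0)

/-- The statistic `Σ_{j>k}|λ^{(j)}| + Σ_{j=1}^{l} λ^{(k)}_j` of the dominance order,
where the component `k` (`1`-based) is `c.1 + 1`. -/
def domStat (Λ : Multipartition m n) (c : Fin m) (l : ℕ) : ℕ :=
  (∑ c' ∈ Finset.univ.filter (fun c' : Fin m => c.1 < c'.1), Λ.compSize c') +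
    ∑ j ∈ Finset.range l, Λ.part c j

/-- The dominance order `Λ ⊵ M`. -/
def Dominates (Λ M : Multipartition m n) : Prop :=
  ∀ (c : Fin m) (l : ℕ), M.domStat c l ≤ Λ.domStat c l

/-- Strict dominance `Λ ▷ M`. -/
def StrictDom (Λ M : Multipartition m n) : Prop :=
  Λ.Dominates M ∧ Λ ≠ M

/-- The (0-based) entry of the canonical tableau `t^Λ` in the box in row `i`, column `j`
of component `c`: the boxes are filled row by row, starting with the rows of `λ^{(m)}`,
then those of `λ^{(m-1)}`, and so on. -/
def canonEntry (Λ : Multipartition m n) (c : Fin m) (i j : ℕ) : ℕ :=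
  (∑ c' ∈ Finset.univ.filter (fun c' : Fin m => c.1 < c'.1), Λ.compSize c') +
    (∑ i' ∈ Finset.range i, Λ.part c i') + j

end Multipartition

/-- A standard tableau of shape `Λ`, with (0-based) entries `0, …, n-1`:
`entry c i j` is the entry in the box in row `i`, column `j` of component `c`
(and is normalised to `0` outside the boxes of `Λ`). -/
structure StdTableau {m n : ℕ} (Λ : Multipartition m n) where
  entry : Fin m → ℕ → ℕ → ℕ
  lt_n : ∀ c i j, j < Λ.part c i → entry c i j < n
  inj : ∀ c i j c' i' j', j < Λ.part c i → j' < Λ.part c' i' →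
    entry c i j = entry c' i' j' → (c, i, j) = (c', i', j')
  surj : ∀ x, x < n → ∃ c i j, j < Λ.part c i ∧ entry c i j = x
  row : ∀ c i j, j + 1 < Λ.part c i → entry c i j < entry c i (j + 1)
  col : ∀ c i j, j < Λ.part c (i + 1) → entry c i j < entry c (i + 1) j
  outside : ∀ c i j, ¬ j < Λ.part c i → entry c i j = 0

variable (k : Type) [Field k] (m n : ℕ)

/-- `d` assigns to each standard tableau `T` of each shape `Λ` the permutation `d(T)`
sending, box by box, the entry of the canonical tableau `t^Λ` to the entry of `T`. -/
def IsD [NeZero n] (d : ∀ Λ : Multipartition m n, StdTableau Λ → Equiv.Perm (Fin n)) : Prop :=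
  ∀ (Λ : Multipartition m n) (T : StdTableau Λ) (c : Fin m) (i j : ℕ), j < Λ.part c i →
    d Λ T ((Λ.canonEntry c i j : ℕ) : Fin n) = ((T.entry c i j : ℕ) : Fin n)

/-- Membership in the row stabiliser `S_Λ` of the canonical tableau `t^Λ`. -/
def InRowStab [NeZero n] (Λ : Multipartition m n) (w : Equiv.Perm (Fin n)) : Prop :=
  ∀ (c : Fin m) (i j : ℕ), j < Λ.part c i →
    ∃ j', j' < Λ.part c i ∧
      w ((Λ.canonEntry c i j : ℕ) : Fin n) = ((Λ.canonEntry c i j' : ℕ) : Fin n)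


variable (k : Type) [Field k] (m n : ℕ) (v : Fin m → k) (q : k)

open Multipartition

/-- The element `x_Λ = Σ_{w ∈ S_Λ} a_w`, where `aw` computes the elements `a_w`. -/
def xlam [NeZero n] (aw : Equiv.Perm (Fin n) → CH k m n v q) (Λ : Multipartition m n) :
    CH k m n v q :=
  ∑ w : Equiv.Perm (Fin n), if InRowStab m n Λ w then aw w else 0

/-- `a_kk = n − |λ^{(1)}| − ⋯ − |λ^{(kk)}|`. -/
def aVal (Λ : Multipartition m n) (kk : ℕ) : ℕ := n - Λ.compSizeUpto kk

/-- The element `u_a = ∏_{kk} (L_1 − v_kk)(L_2 − v_kk)⋯(L_{a_kk} − v_kk)`. -/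
def ua [NeZero n] (Λ : Multipartition m n) : CH k m n v q :=
  (List.ofFn fun kk : Fin m =>
    (List.ofFn fun ii : Fin n =>
      if ii.1 < aVal m n Λ (kk.1 + 1) then
        murphy k m n v q ii - algebraMap k (CH k m n v q) (v kk)
      else 1).prod).prod

/-- The element `m_Λ = x_Λ u_a`. -/
def mlam [NeZero n] (aw : Equiv.Perm (Fin n) → CH k m n v q) (Λ : Multipartition m n) :
    CH k m n v q :=
  xlam k m n v q aw Λ * ua k m n v q Λ

/-- The element `m_{st} = a_{d(s)}^* ⬝ m_Λ ⬝ a_{d(t)}`;  here `aw` computes the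
elements `a_w`, `σ` is the `*` anti-involution and `d` computes the permutations `d(t)`. -/
def mst [NeZero n] (aw : Equiv.Perm (Fin n) → CH k m n v q) (σ : CH k m n v q →ₗ[k] CH k m n v q)
    (d : ∀ Λ : Multipartition m n, StdTableau Λ → Equiv.Perm (Fin n))
    {Λ : Multipartition m n} (s t : StdTableau Λ) : CH k m n v q :=
  σ (aw (d Λ s)) * mlam k m n v q aw Λ * aw (d Λ t)

/-- `σ` is the `*` anti-involution: the `k`-linear anti-automorphism fixing the generators. -/
def IsStar [NeZero n] (σ : CH k m n v q →ₗ[k] CH k m n v q) : Prop :=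
  σ 1 = 1 ∧ (∀ x y, σ (x * y) = σ y * σ x) ∧ ∀ t, t < n → σ (gen k m n v q t) = gen k m n v q t

/-- The set of elements `m_{uv}`, for `u, v` standard tableaux of a common shape `M ▷ Λ`. -/
def IsetSet [NeZero n] (aw : Equiv.Perm (Fin n) → CH k m n v q)
    (σ : CH k m n v q →ₗ[k] CH k m n v q)
    (d : ∀ Λ : Multipartition m n, StdTableau Λ → Equiv.Perm (Fin n))
    (Λ : Multipartition m n) : Set (CH k m n v q) :=
  {x | ∃ (M : Multipartition m n) (_ : M.StrictDom Λ) (u v' : StdTableau M),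
    x = mst k m n v q aw σ d u v'}

/-- `I_Λ`, the `k`-span of the `m_{uv}` with shape strictly dominating `Λ`. -/
def Ilam [NeZero n] (aw : Equiv.Perm (Fin n) → CH k m n v q)
    (σ : CH k m n v q →ₗ[k] CH k m n v q)
    (d : ∀ Λ : Multipartition m n, StdTableau Λ → Equiv.Perm (Fin n))
    (Λ : Multipartition m n) : Submodule k (CH k m n v q) :=
  Submodule.span k (IsetSet k m n v q aw σ d Λ)

/-- The image `z_Λ h` of `m_Λ h` in the quotient `H_n / I_Λ`. -/
def zh [NeZero n] (aw : Equiv.Perm (Fin n) → CH k m n v q)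
    (σ : CH k m n v q →ₗ[k] CH k m n v q)
    (d : ∀ Λ : Multipartition m n, StdTableau Λ → Equiv.Perm (Fin n))
    (Λ : Multipartition m n) (h : CH k m n v q) :
    CH k m n v q ⧸ Ilam k m n v q aw σ d Λ :=
  Submodule.Quotient.mk (mlam k m n v q aw Λ * h)

/-- The Specht module `S^Λ = z_Λ ⬝ (H_n/I_Λ)`, as a `k`-submodule of `H_n / I_Λ`. -/
def Specht [NeZero n] (aw : Equiv.Perm (Fin n) → CH k m n v q)
    (σ : CH k m n v q →ₗ[k] CH k m n v q)
    (d : ∀ Λ : Multipartition m n, StdTableau Λ → Equiv.Perm (Fin n))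
    (Λ : Multipartition m n) :
    Submodule k (CH k m n v q ⧸ Ilam k m n v q aw σ d Λ) :=
  Submodule.span k (Set.range (zh k m n v q aw σ d Λ))

/-- The generator `z_Λ h` as an element of the Specht module. -/
def zhS [NeZero n] (aw : Equiv.Perm (Fin n) → CH k m n v q)
    (σ : CH k m n v q →ₗ[k] CH k m n v q)
    (d : ∀ Λ : Multipartition m n, StdTableau Λ → Equiv.Perm (Fin n))
    (Λ : Multipartition m n) (h : CH k m n v q) :
    Specht k m n v q aw σ d Λ :=
  ⟨zh k m n v q aw σ d Λ h, Submodule.subset_span ⟨h, rfl⟩⟩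

/-!
`H_{N+1}` acts on an explicit model of the module induced from `H_N`: `N + 1` copies of the
space of polynomials over `H_N` of degree less than `m`, where `p(X)` in the `i`-th copy stands for
`a_{i+2} ⋯ a_{N+1} p(L_{N+1})`, with `L = L_{N+1}` the last Jucys–Murphy element. Reading off the
constant coefficient in the last copy of the vector `h · 1` defines an `H_N`-bimodule map
`E : H_{N+1} → H_N` with `E(L^s) = δ_{s,0}` for `s < m` and `E(L^s T) = E(T L^s) = 0`, where
`T = a_{N+1}`, such that `E(T x T) = q F(x)` for `x ∈ H_N`, where `F : H_N → H_{N-1}` is the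
previous map. The composite of these maps down to `H_0 = k` is the trace. As
`H_{N+1} = ∑_{s < m} L^s H_N + H_N T H_N`, the symmetry of the trace can be checked
on these spanning elements. Since `L` and `q` are invertible, the identity of `H_{N+1}` is a sum of
operators `x ↦ E(x a) b`; hence `x = 0` as soon as `E(x a) = 0` for all `a`, and nondegeneracy
follows by induction on `N`.
-/

section Presentation

open Polynomial

variable {k : Type} [Field k] {m : ℕ}

/-- The polynomial `f = (X - v_1) ⋯ (X - v_m)` annihilating `a_1`. -/
def parameterPoly (v : Fin m → k) : k[X] := ∏ j, (X - C (v j))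

theorem monic_parameterPoly (v : Fin m → k) : (parameterPoly v).Monic :=
  monic_prod_of_monic _ _ fun j _ => monic_X_sub_C (v j)

theorem natDegree_parameterPoly (v : Fin m → k) : (parameterPoly v).natDegree = m := by
  simp [parameterPoly, natDegree_prod_of_monic _ _ fun j _ => monic_X_sub_C (v j)]

theorem degree_parameterPoly (v : Fin m → k) : (parameterPoly v).degree = m := by
  rw [degree_eq_natDegree (monic_parameterPoly v).ne_zero, natDegree_parameterPoly]

theorem coeff_zero_parameterPoly_ne_zero {v : Fin m → k} (hv : ∀ j, v j ≠ 0) :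
    (parameterPoly v).coeff 0 ≠ 0 := by
  simp [parameterPoly, coeff_zero_prod, Finset.prod_ne_zero_iff, hv]

variable {A : Type*} [Ring A] [Algebra k A]

theorem aeval_parameterPoly (v : Fin m → k) (y : A) :
    aeval y (parameterPoly v) = (List.ofFn fun j => y - algebraMap k A (v j)).prod := by
  rw [parameterPoly, ← List.prod_ofFn, map_list_prod, List.map_ofFn]
  simp [Function.comp_def]

theorem hecke_quadratic_iff (q : k) (y : A) :
    (y - algebraMap k A q) * (y + 1) = 0 ↔ y * y = (q - 1) • y + q • (1 : A) := by
  rw [← sub_eq_zero (a := y * y), Algebra.algebraMap_eq_smul_one, sub_mul, mul_add, mul_one,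
    smul_mul_assoc, one_mul]
  congr! 1
  module

/-- The elements `g 0, …, g (N - 1)` satisfy the defining relations of `H_N(v_1,…,v_m;q)`, with
`g i` in the role of `a_{i+1}`. -/
structure HeckeRelations (v : Fin m → k) (q : k) (N : ℕ) (g : ℕ → A) : Prop where
  cyclotomic : 0 < N → aeval (g 0) (parameterPoly v) = 0
  quadratic : ∀ l, 1 ≤ l → l < N → g l * g l = (q - 1) • g l + q • (1 : A)
  braid_four : 1 < N → g 0 * g 1 * g 0 * g 1 = g 1 * g 0 * g 1 * g 0
  commute : ∀ i j, i + 2 ≤ j → j < N → Commute (g i) (g j)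
  braid : ∀ i, 1 ≤ i → i + 1 < N → g (i + 1) * g i * g (i + 1) = g i * g (i + 1) * g i

namespace HeckeRelations

variable {B : Type*} [Ring B] [Algebra k B] {v : Fin m → k} {q : k} {N : ℕ} {g : ℕ → A}

theorem map (hg : HeckeRelations v q N g) (φ : A →ₐ[k] B) :
    HeckeRelations v q N fun l => φ (g l) where
  cyclotomic h := by rw [aeval_algHom_apply, hg.cyclotomic h, map_zero]
  quadratic l h₁ h := by
    simp only [← map_mul, hg.quadratic l h₁ h, map_add, map_smul, map_one]
  braid_four h := by simp only [← map_mul, hg.braid_four h]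
  commute i j hij hj := (hg.commute i j hij hj).map φ
  braid i h₁ h := by simp only [← map_mul, hg.braid i h₁ h]

theorem mono {N' : ℕ} (hg : HeckeRelations v q N' g) (h : N ≤ N') : HeckeRelations v q N g where
  cyclotomic h₀ := hg.cyclotomic (by omega)
  quadratic l h₁ hl := hg.quadratic l h₁ (by omega)
  braid_four h₁ := hg.braid_four (by omega)
  commute i j hij hj := hg.commute i j hij (by omega)
  braid i h₁ hi := hg.braid i h₁ (by omega)

end HeckeRelations

/-- The quotient map from the free algebra onto `H_N`. -/
def mkHecke (v : Fin m → k) (q : k) (N : ℕ) : FreeAlgebra k (Fin N) →ₐ[k] CH k m N v q :=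
  RingQuot.mkAlgHom k (Rel k m N v q)

theorem mkHecke_eq_of_rel {v : Fin m → k} {q : k} {N : ℕ} {x y : FreeAlgebra k (Fin N)}
    (h : Rel k m N v q x y) : mkHecke v q N x = mkHecke v q N y :=
  RingQuot.mkAlgHom_rel k h

/-- The generators of `H_N`, indexed by `ℕ`: `generator v q N l` is `a_{l+1}` for `l < N`, and `0`
otherwise. -/
def generator (v : Fin m → k) (q : k) (N l : ℕ) : CH k m N v q :=
  if h : l < N then mkHecke v q N (FreeAlgebra.ι k ⟨l, h⟩) else 0

theorem generator_of_lt (v : Fin m → k) (q : k) {N l : ℕ} (h : l < N) :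
    generator v q N l = mkHecke v q N (FreeAlgebra.ι k ⟨l, h⟩) :=
  dif_pos h

theorem heckeRelations_generator (v : Fin m → k) (q : k) (N : ℕ) :
    HeckeRelations v q N (generator v q N) where
  cyclotomic h := by
    have rel := mkHecke_eq_of_rel (Rel.cyclo (v := v) (q := q) ⟨0, h⟩ rfl)
    rwa [← aeval_parameterPoly, ← aeval_algHom_apply, map_zero, ← generator_of_lt] at rel
  quadratic l h₁ h := by
    have rel := mkHecke_eq_of_rel (Rel.quad (v := v) (q := q) ⟨l, h⟩ h₁)
    rw [← hecke_quadratic_iff, generator_of_lt v q h]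
    simpa using rel
  braid_four h := by
    have rel := mkHecke_eq_of_rel (Rel.braid0 (v := v) (q := q) ⟨0, by omega⟩ ⟨1, h⟩ rfl rfl)
    simpa only [map_mul, ← generator_of_lt] using rel
  commute i j hij hj := by
    have rel := mkHecke_eq_of_rel (Rel.comm (v := v) (q := q) ⟨i, by omega⟩ ⟨j, hj⟩ hij)
    simpa only [map_mul, ← generator_of_lt, commute_iff_eq] using rel
  braid i h₁ h := by
    have rel := mkHecke_eq_of_rel (Rel.braid (v := v) (q := q) ⟨i, by omega⟩ ⟨i + 1, h⟩ h₁ rfl)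
    simpa only [map_mul, ← generator_of_lt] using rel

theorem adjoin_generator (v : Fin m → k) (q : k) (N : ℕ) :
    Algebra.adjoin k (generator v q N '' Set.Iio N) = ⊤ := by
  have image_eq : mkHecke v q N '' Set.range (FreeAlgebra.ι k) = generator v q N '' Set.Iio N := by
    ext x
    constructor
    · rintro ⟨_, ⟨i, rfl⟩, rfl⟩
      exact ⟨i, i.2, generator_of_lt v q i.2⟩
    · rintro ⟨l, hl, rfl⟩
      exact ⟨_, ⟨⟨l, hl⟩, rfl⟩, (generator_of_lt v q hl).symm⟩
  rw [← image_eq, ← AlgHom.map_adjoin, FreeAlgebra.adjoin_range_ι, Algebra.map_top]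
  exact (AlgHom.range_eq_top _).2 (RingQuot.mkAlgHom_surjective k _)

theorem generator_induction {v : Fin m → k} {q : k} {N : ℕ} {p : CH k m N v q → Prop}
    (algebraMap : ∀ c : k, p (algebraMap k _ c)) (generator : ∀ l, l < N → p (generator v q N l))
    (mul : ∀ x y, p x → p y → p (x * y)) (add : ∀ x y, p x → p y → p (x + y)) (x) : p x := by
  have hx : x ∈ Algebra.adjoin k (Cyclo.generator v q N '' Set.Iio N) :=
    adjoin_generator v q N ▸ Algebra.mem_top
  induction hx using Algebra.adjoin_induction with
  | mem x hx => obtain ⟨l, hl, rfl⟩ := hx; exact generator l hl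
  | algebraMap c => exact algebraMap c
  | add x y _ _ hx hy => exact add x y hx hy
  | mul x y _ _ hx hy => exact mul x y hx hy

theorem mem_of_generator_mul_mem {v : Fin m → k} {q : k} {N : ℕ} {S : Submodule k (CH k m N v q)}
    (one_mem : 1 ∈ S) (mul_mem : ∀ l, l < N → ∀ x ∈ S, generator v q N l * x ∈ S)
    (x : CH k m N v q) : x ∈ S := by
  suffices left_ideal : ∀ y ∈ S, x * y ∈ S by simpa using left_ideal 1 one_mem
  induction x using generator_induction with
  | algebraMap c => intro y hy; rw [← Algebra.smul_def]; exact S.smul_mem _ hy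
  | generator l hl => exact mul_mem l hl
  | mul a b ha hb => intro y hy; rw [mul_assoc]; exact ha _ (hb _ hy)
  | add a b ha hb => intro y hy; rw [add_mul]; exact S.add_mem (ha _ hy) (hb _ hy)

theorem commute_of_commute_generator {v : Fin m → k} {q : k} {N : ℕ} {φ : CH k m N v q →ₐ[k] A}
    {y : A} (h : ∀ l, l < N → Commute y (φ (generator v q N l))) (x : CH k m N v q) :
    Commute y (φ x) := by
  induction x using generator_induction with
  | algebraMap c => rw [AlgHom.commutes]; exact (Algebra.commutes c y).symm
  | generator l hl => exact h l hl
  | mul a b ha hb => rw [map_mul]; exact ha.mul_right hb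
  | add a b ha hb => rw [map_add]; exact ha.add_right hb

variable {v : Fin m → k} {q : k} {N : ℕ} {g : ℕ → A}

/-- The algebra morphism `H_N → A` sending `a_{l+1}` to `g l`. -/
def HeckeRelations.lift (hg : HeckeRelations v q N g) : CH k m N v q →ₐ[k] A :=
  RingQuot.liftAlgHom k ⟨FreeAlgebra.lift k fun i : Fin N => g i, by
    intro x y h
    induction h with
    | cyclo i hi =>
      rw [← aeval_parameterPoly, ← aeval_algHom_apply, map_zero, FreeAlgebra.lift_ι_apply, hi]
      exact hg.cyclotomic (by have := i.2; omega)
    | quad i hi =>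
      simpa using (hecke_quadratic_iff q (g i)).2 (hg.quadratic i hi i.2)
    | braid0 i j hi hj =>
      simpa [hi, hj] using hg.braid_four (by have := j.2; omega)
    | comm i j h =>
      simpa using (hg.commute i j h j.2).eq
    | braid i j hi hj =>
      simpa [hj] using hg.braid i hi (by have := j.2; omega)⟩

theorem HeckeRelations.lift_generator (hg : HeckeRelations v q N g) {l : ℕ} (hl : l < N) :
    hg.lift (generator v q N l) = g l := by
  rw [generator_of_lt v q hl]
  exact (RingQuot.liftAlgHom_mkAlgHom_apply (S := k) ..).trans (FreeAlgebra.lift_ι_apply ..)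

end Presentation

section InducedT

variable {k : Type} [Field k] {m : ℕ} {P : Type*} [Ring P] [Algebra k P]

/-- The action of the generator `a_{l+2}` of `H_{N+1}` on `⨁ i ≤ N, P`, the `i`-th summand standing
for `a_{i+2} ⋯ a_{N+1} P`. -/
def inducedT (q : k) (G : ℕ → P) (l : ℕ) : (ℕ → P) →ₗ[k] (ℕ → P) :=
  LinearMap.pi fun i =>
    if i < l then LinearMap.mulLeft k (G l) ∘ₗ LinearMap.proj i
    else if i = l then LinearMap.proj (l + 1) + (q - 1) • LinearMap.proj l
    else if i = l + 1 then q • LinearMap.proj l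
    else LinearMap.mulLeft k (G (l + 1)) ∘ₗ LinearMap.proj i

variable {q : k} {G : ℕ → P}

theorem inducedT_apply_of_lt {l i : ℕ} (w : ℕ → P) (h : i < l) :
    inducedT q G l w i = G l * w i := by
  simp [inducedT, h]

theorem inducedT_apply_self (l : ℕ) (w : ℕ → P) :
    inducedT q G l w l = w (l + 1) + (q - 1) • w l := by
  simp [inducedT]

theorem inducedT_apply_succ (l : ℕ) (w : ℕ → P) : inducedT q G l w (l + 1) = q • w l := by
  simp [inducedT]

theorem inducedT_apply_of_gt {l i : ℕ} (w : ℕ → P) (h : l + 1 < i) :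
    inducedT q G l w i = G (l + 1) * w i := by
  simp [inducedT, show ¬ i < l by omega, show ¬ i = l by omega, show ¬ i = l + 1 by omega]

theorem inducedT_single_succ (l : ℕ) (p : P) :
    inducedT q G l (Pi.single (l + 1) p) = Pi.single l p := by
  funext i
  obtain h | rfl | rfl | h : i < l ∨ i = l ∨ i = l + 1 ∨ l + 1 < i := by omega
  · rw [inducedT_apply_of_lt _ h, Pi.single_eq_of_ne (by omega), Pi.single_eq_of_ne (by omega),
      mul_zero]
  · simp [inducedT_apply_self]
  · simp [inducedT_apply_succ]
  · rw [inducedT_apply_of_gt _ h, Pi.single_eq_of_ne (by omega), Pi.single_eq_of_ne (by omega),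
      mul_zero]

theorem inducedT_single_of_gt {l j : ℕ} (h : l + 1 < j) (p : P) :
    inducedT q G l (Pi.single j p) = Pi.single j (G (l + 1) * p) := by
  funext i
  obtain h' | rfl | rfl | h' : i < l ∨ i = l ∨ i = l + 1 ∨ l + 1 < i := by omega
  · rw [inducedT_apply_of_lt _ h', Pi.single_eq_of_ne (by omega), Pi.single_eq_of_ne (by omega),
      mul_zero]
  · rw [inducedT_apply_self, Pi.single_eq_of_ne (by omega), Pi.single_eq_of_ne (by omega),
      Pi.single_eq_of_ne (by omega), smul_zero, add_zero]
  · rw [inducedT_apply_succ, Pi.single_eq_of_ne (by omega), Pi.single_eq_of_ne (by omega),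
      smul_zero]
  · rw [inducedT_apply_of_gt _ h']
    exact congrFun (Pi.single_op (fun _ => (G (l + 1) * ·)) (fun _ => mul_zero _) j p).symm i

theorem inducedT_map {P' : Type*} [Ring P'] [Algebra k P'] {N : ℕ} {G' : ℕ → P'} {φ : P →ₐ[k] P'}
    (hφ : ∀ l < N, φ (G l) = G' l) {w : ℕ → P} {w' : ℕ → P'} (hw : ∀ i ≤ N, w' i = φ (w i))
    {l i : ℕ} (hl : l < N) (hi : i ≤ N) : inducedT q G' l w' i = φ (inducedT q G l w i) := by
  obtain h | rfl | rfl | h : i < l ∨ i = l ∨ i = l + 1 ∨ l + 1 < i := by omega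
  · rw [inducedT_apply_of_lt _ h, inducedT_apply_of_lt _ h, map_mul, hφ l hl, hw i hi]
  · rw [inducedT_apply_self, inducedT_apply_self, map_add, map_smul, hw i hi, hw _ hl]
  · rw [inducedT_apply_succ, inducedT_apply_succ, map_smul, hw l hl.le]
  · rw [inducedT_apply_of_gt _ h, inducedT_apply_of_gt _ h, map_mul, hφ _ (by omega), hw i hi]

theorem inducedT_mul_right (l : ℕ) (w : ℕ → P) (b : P) (i : ℕ) :
    inducedT q G l (fun j => w j * b) i = inducedT q G l w i * b := by
  simp only [inducedT, LinearMap.pi_apply]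
  split_ifs <;> simp [mul_assoc, add_mul]

variable {v : Fin m → k} {N : ℕ}

theorem HeckeRelations.mul_mul_self (hG : HeckeRelations v q N G) {l : ℕ} (h₁ : 1 ≤ l) (h : l < N)
    (x : P) : G l * (G l * x) = (q - 1) • (G l * x) + q • x := by
  rw [← mul_assoc, hG.quadratic l h₁ h, add_mul, smul_mul_assoc, smul_mul_assoc, one_mul]

theorem inducedT_quadratic (hG : HeckeRelations v q N G) {l i : ℕ} (hl : l < N) (hi : i ≤ N)
    (w : ℕ → P) :
    inducedT q G l (inducedT q G l w) i = (q - 1) • inducedT q G l w i + q • w i := by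
  obtain h | rfl | rfl | h : i < l ∨ i = l ∨ i = l + 1 ∨ l + 1 < i := by omega
  · simp only [inducedT_apply_of_lt _ h]
    exact hG.mul_mul_self (by omega) (by omega) _
  · simp only [inducedT_apply_self, inducedT_apply_succ]
    module
  · simp only [inducedT_apply_self, inducedT_apply_succ]
    module
  · simp only [inducedT_apply_of_gt _ h]
    exact hG.mul_mul_self (by omega) (by omega) _

theorem inducedT_comm (hG : HeckeRelations v q N G) {a b i : ℕ} (hab : a + 2 ≤ b) (hb : b < N)
    (hi : i ≤ N) (w : ℕ → P) :
    inducedT q G a (inducedT q G b w) i = inducedT q G b (inducedT q G a w) i := by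
  obtain h | rfl | rfl | h : i < a ∨ i = a ∨ i = a + 1 ∨ a + 1 < i := by omega
  · simp only [inducedT_apply_of_lt _ h, inducedT_apply_of_lt _ (show i < b by omega)]
    exact (hG.commute a b hab hb).left_comm _
  · simp only [inducedT_apply_self, inducedT_apply_of_lt _ (show i < b by omega),
      inducedT_apply_of_lt _ (show i + 1 < b by omega), mul_add, mul_smul_comm]
  · simp only [inducedT_apply_succ, inducedT_apply_of_lt _ (show a + 1 < b by omega),
      inducedT_apply_of_lt _ (show a < b by omega), mul_smul_comm]
  obtain h' | rfl | rfl | h' : i < b ∨ i = b ∨ i = b + 1 ∨ b + 1 < i := by omega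
  · simp only [inducedT_apply_of_gt _ h, inducedT_apply_of_lt _ h']
    exact (hG.commute (a + 1) b (by omega) hb).left_comm _
  · simp only [inducedT_apply_self, inducedT_apply_of_gt _ h,
      inducedT_apply_of_gt _ (show a + 1 < i + 1 by omega), mul_add, mul_smul_comm]
  · simp only [inducedT_apply_succ, inducedT_apply_of_gt _ h,
      inducedT_apply_of_gt _ (show a + 1 < b by omega), mul_smul_comm]
  · simp only [inducedT_apply_of_gt _ h, inducedT_apply_of_gt _ h']
    exact (hG.commute (a + 1) (b + 1) (by omega) (by omega)).left_comm _

theorem inducedT_braid (hG : HeckeRelations v q N G) {a i : ℕ} (ha : a + 1 < N) (hi : i ≤ N)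
    (w : ℕ → P) :
    inducedT q G (a + 1) (inducedT q G a (inducedT q G (a + 1) w)) i =
      inducedT q G a (inducedT q G (a + 1) (inducedT q G a w)) i := by
  obtain h | rfl | rfl | rfl | h : i < a ∨ i = a ∨ i = a + 1 ∨ i = a + 2 ∨ a + 2 < i := by omega
  · simp only [inducedT_apply_of_lt _ h, inducedT_apply_of_lt _ (show i < a + 1 by omega),
      ← mul_assoc, hG.braid a (by omega) (by omega)]
  · simp only [inducedT_apply_of_lt _ i.lt_add_one, inducedT_apply_self, inducedT_apply_succ,
      inducedT_apply_of_gt _ (i + 1).lt_add_one, mul_add, mul_smul_comm,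
      hG.mul_mul_self (show 1 ≤ i + 1 by omega) ha]
    module
  · simp only [inducedT_apply_of_lt _ a.lt_add_one, inducedT_apply_self, inducedT_apply_succ,
      inducedT_apply_of_gt _ (a + 1).lt_add_one, mul_add, mul_smul_comm]
    module
  · simp only [inducedT_apply_of_lt _ a.lt_add_one, inducedT_apply_succ,
      inducedT_apply_of_gt _ (a + 1).lt_add_one, mul_smul_comm]
  · simp only [inducedT_apply_of_gt _ h, inducedT_apply_of_gt _ (show a + 1 < i by omega),
      ← mul_assoc, hG.braid (a + 1) (by omega) (by omega)]

end InducedT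

section ScaledInverse

variable {k : Type} [Field k] {m : ℕ} {P : Type*} [Ring P] [Algebra k P]

/-- The element `q G_l⁻¹ = G_l - (q - 1)`. -/
def scaledInv (q : k) (G : ℕ → P) (l : ℕ) : P := G l - (q - 1) • (1 : P)

/-- The product `(q G_1⁻¹) ⋯ (q G_j⁻¹)`. -/
def scaledInvProd (q : k) (G : ℕ → P) : ℕ → P
  | 0 => 1
  | j + 1 => scaledInvProd q G j * scaledInv q G (j + 1)

theorem scaledInvProd_map {P' : Type*} [Ring P'] [Algebra k P'] (q : k) {φ : P →ₐ[k] P'}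
    {G : ℕ → P} {G' : ℕ → P'} {j : ℕ} (hφ : ∀ l ≤ j, φ (G l) = G' l) :
    φ (scaledInvProd q G j) = scaledInvProd q G' j := by
  induction j with
  | zero => simp [scaledInvProd]
  | succ j ih =>
    simp [scaledInvProd, scaledInv, ih fun l hl => hφ l (by omega), hφ (j + 1) le_rfl]

variable {v : Fin m → k} {q : k} {N : ℕ} {G : ℕ → P}

theorem mul_scaledInv (hG : HeckeRelations v q N G) {l : ℕ} (h₁ : 1 ≤ l) (h : l < N) :
    G l * scaledInv q G l = q • (1 : P) := by
  rw [scaledInv, mul_sub, hG.quadratic l h₁ h, mul_smul_comm, mul_one, add_sub_cancel_left]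

theorem scaledInv_mul (hG : HeckeRelations v q N G) {l : ℕ} (h₁ : 1 ≤ l) (h : l < N) :
    scaledInv q G l * G l = q • (1 : P) := by
  rw [scaledInv, sub_mul, hG.quadratic l h₁ h, smul_mul_assoc, one_mul, add_sub_cancel_left]

theorem commute_scaledInv {x : P} {l : ℕ} (h : Commute x (G l)) :
    Commute x (scaledInv q G l) :=
  h.sub_right ((Commute.one_right x).smul_right _)

theorem commute_scaledInvProd {x : P} {j : ℕ} (h : ∀ l, 1 ≤ l → l ≤ j → Commute x (G l)) :
    Commute x (scaledInvProd q G j) := by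
  induction j with
  | zero => exact Commute.one_right x
  | succ j ih =>
    exact (ih fun l h₁ hl => h l h₁ (by omega)).mul_right
      (commute_scaledInv (h _ (by omega) le_rfl))

theorem scaledInvProd_mul_generator (j : ℕ) :
    scaledInvProd q G j * G (j + 1) =
      scaledInvProd q G (j + 1) + (q - 1) • scaledInvProd q G j := by
  rw [scaledInvProd, scaledInv, mul_sub, mul_smul_comm, mul_one, sub_add_cancel]

theorem scaledInvProd_succ_mul_generator (hG : HeckeRelations v q N G) {j : ℕ} (h : j + 1 < N) :
    scaledInvProd q G (j + 1) * G (j + 1) = q • scaledInvProd q G j := by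
  rw [scaledInvProd, mul_assoc, scaledInv_mul hG (by omega) h, mul_smul_comm, mul_one]

theorem generator_mul_scaledInv_mul_scaledInv (hG : HeckeRelations v q N G) {a : ℕ} (h₁ : 1 ≤ a)
    (h : a + 1 < N) :
    G (a + 1) * (scaledInv q G a * scaledInv q G (a + 1)) =
      scaledInv q G a * scaledInv q G (a + 1) * G a := by
  simp only [scaledInv, mul_sub, sub_mul, mul_smul_comm, smul_mul_assoc, mul_one, one_mul,
    ← mul_assoc, hG.braid a h₁ h, hG.quadratic a h₁ (by omega),
    hG.quadratic (a + 1) (by omega) h]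
  module

theorem generator_succ_mul_scaledInvProd (hG : HeckeRelations v q N G) {a j : ℕ} (h₁ : 1 ≤ a)
    (haj : a < j) (hj : j < N) :
    G (a + 1) * scaledInvProd q G j = scaledInvProd q G j * G a := by
  induction j with
  | zero => omega
  | succ j ih =>
    obtain h | rfl : a < j ∨ a = j := by omega
    · have hcomm : Commute (G a) (scaledInv q G (j + 1)) :=
        commute_scaledInv (hG.commute _ _ (by omega) hj)
      rw [scaledInvProd, ← mul_assoc, ih h (by omega), mul_assoc, mul_assoc, hcomm.eq]
    · obtain ⟨b, rfl⟩ : ∃ b, a = b + 1 := ⟨a - 1, by omega⟩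
      have hcomm : Commute (G (b + 1 + 1)) (scaledInvProd q G b) :=
        commute_scaledInvProd fun l _ hl => (hG.commute l _ (by omega) hj).symm
      rw [scaledInvProd, scaledInvProd, mul_assoc, hcomm.left_comm,
        generator_mul_scaledInv_mul_scaledInv hG h₁ hj]
      simp only [mul_assoc]

theorem exists_scaledInvProd_succ_eq (hG : HeckeRelations v q N G) {j : ℕ} (hj : j + 1 < N) :
    ∃ t : P, scaledInvProd q G (j + 1) = scaledInv q G 1 * t ∧ Commute t (G 0) := by
  induction j with
  | zero => exact ⟨1, by simp [scaledInvProd], Commute.one_left _⟩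
  | succ j ih =>
    obtain ⟨t, ht, hcomm⟩ := ih (by omega)
    refine ⟨t * scaledInv q G (j + 1 + 1), by rw [scaledInvProd, ht, mul_assoc],
      hcomm.mul_left ?_⟩
    exact (commute_scaledInv (hG.commute 0 _ (by omega) hj)).symm

end ScaledInverse

section InducedX

variable {k : Type} [Field k] {m : ℕ} {P : Type*} [Ring P] [Algebra k P]

/-- What the action of `a_1` on the induced module uses of the polynomial ring `P = B[z]` and of a
monic polynomial `f` of degree `m` with scalar coefficients that annihilates `G 0 ∈ B`: the
quotient `K = f / (z - G 0)`, and the map `top` extracting the coefficient of `z ^ (m - 1)`. -/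
structure ReductionDatum (k : Type) [Field k] [Algebra k P] (N : ℕ) (G : ℕ → P) where
  z : P
  f : P
  K : P
  top : P →ₗ[k] P
  commute_z : ∀ x, Commute x z
  commute_f : ∀ x, Commute x f
  commute_K : ∀ {x}, Commute x (G 0) → Commute x K
  z_mul_K : 0 < N → z * K = f + G 0 * K
  top_G_mul : ∀ l p, top (G l * p) = G l * top p
  top_K_mul_top : ∀ p, top (K * top p) = top p

namespace ReductionDatum

variable {N : ℕ} {G : ℕ → P} (D : ReductionDatum k N G) (q : k)

/-- Multiplication by `z` modulo `f`, on polynomials of degree less than `m`. -/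
def reducedMul : P →ₗ[k] P := LinearMap.mulLeft k D.z - LinearMap.mulLeft k D.f ∘ₗ D.top

/-- The polynomial `z (S_j p - K S_j (top p))`, where `S_j = scaledInvProd q G j`. Up to the factor
`1 - q`, it is the component of `a_1 p` in the summand `j + 1` for `p` in the summand `0`. -/
def correction (j : ℕ) : P →ₗ[k] P :=
  LinearMap.mulLeft k D.z ∘ₗ (LinearMap.mulLeft k (scaledInvProd q G j) -
    LinearMap.mulLeft k (D.K * scaledInvProd q G j) ∘ₗ D.top)

/-- The action of the generator `a_1` of `H_{N+1}` on `⨁ i ≤ N, P`. -/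
def inducedX : (ℕ → P) →ₗ[k] (ℕ → P) :=
  LinearMap.pi fun
    | 0 => D.reducedMul ∘ₗ LinearMap.proj 0
    | j + 1 =>
      if j < N then LinearMap.mulLeft k (G 0) ∘ₗ LinearMap.proj (j + 1) -
        (q - 1) • D.correction q j ∘ₗ LinearMap.proj 0
      else 0

theorem reducedMul_apply (p : P) : D.reducedMul p = D.z * p - D.f * D.top p := rfl

theorem correction_apply (j : ℕ) (p : P) : D.correction q j p =
    D.z * (scaledInvProd q G j * p - D.K * (scaledInvProd q G j * D.top p)) := by
  simp [correction]

theorem inducedX_apply_zero (w : ℕ → P) : D.inducedX q w 0 = D.reducedMul (w 0) := rfl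

theorem inducedX_apply_succ (w : ℕ → P) {j : ℕ} (h : j < N) :
    D.inducedX q w (j + 1) = G 0 * w (j + 1) - (q - 1) • D.correction q j (w 0) := by
  simp [inducedX, h]

theorem inducedX_apply_of_gt (w : ℕ → P) {i : ℕ} (h : N < i) : D.inducedX q w i = 0 := by
  obtain ⟨j, rfl⟩ : ∃ j, i = j + 1 := ⟨i - 1, by omega⟩
  simp [inducedX, show ¬ j < N by omega]

theorem inducedX_single {j : ℕ} (hj : j < N) (p : P) :
    D.inducedX q (Pi.single (j + 1) p) = Pi.single (j + 1) (G 0 * p) := by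
  funext i
  obtain hi | hi := lt_or_ge N i
  · rw [inducedX_apply_of_gt _ _ _ hi, Pi.single_eq_of_ne (by omega)]
  rcases i with _ | i
  · rw [inducedX_apply_zero, Pi.single_eq_of_ne (by omega), map_zero, Pi.single_eq_of_ne (by omega)]
  · rw [inducedX_apply_succ _ _ _ hi, Pi.single_eq_of_ne (i' := 0) (by omega), map_zero, smul_zero,
      sub_zero]
    exact congrFun (Pi.single_op (fun _ => (G 0 * ·)) (fun _ => mul_zero _) (j + 1) p).symm (i + 1)

theorem inducedX_mul_right {b : P} (hb : ∀ p, D.top (p * b) = D.top p * b) (w : ℕ → P) (i : ℕ) :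
    D.inducedX q (fun j => w j * b) i = D.inducedX q w i * b := by
  obtain hi | hi := lt_or_ge N i
  · rw [inducedX_apply_of_gt _ _ _ hi, inducedX_apply_of_gt _ _ _ hi, zero_mul]
  rcases i with _ | i
  · simp only [inducedX_apply_zero, reducedMul_apply, hb, sub_mul, mul_assoc]
  · simp only [inducedX_apply_succ _ _ _ hi, correction_apply, hb, sub_mul, mul_sub,
      smul_mul_assoc, mul_assoc]

theorem inducedX_map {P' : Type*} [Ring P'] [Algebra k P'] {N' : ℕ} {G' : ℕ → P'}
    {D' : ReductionDatum k N' G'} {φ : P →ₐ[k] P'} (hN : N ≤ N') (hφ : ∀ l < N, φ (G l) = G' l)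
    (hz : φ D.z = D'.z) (hf : φ D.f = D'.f) (hK : 0 < N → φ D.K = D'.K)
    (htop : ∀ p, φ (D.top p) = D'.top (φ p)) {w : ℕ → P} {w' : ℕ → P'}
    (hw : ∀ i ≤ N, w' i = φ (w i)) {i : ℕ} (hi : i ≤ N) :
    D'.inducedX q w' i = φ (D.inducedX q w i) := by
  rcases i with _ | j
  · simp only [inducedX_apply_zero, reducedMul_apply, map_sub, map_mul, hz, hf, htop, hw 0 hi]
  · rw [inducedX_apply_succ _ _ _ hi, inducedX_apply_succ _ _ _ (by omega), correction_apply,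
      correction_apply, hw _ hi, hw 0 (Nat.zero_le N),
      ← scaledInvProd_map q (fun l hl => hφ l (by omega))]
    simp only [map_sub, map_smul, map_mul, hφ 0 (by omega), hz, hK (by omega), htop]

variable {D q}

theorem G_mul_reducedMul (l : ℕ) (p : P) : G l * D.reducedMul p = D.reducedMul (G l * p) := by
  rw [reducedMul_apply, reducedMul_apply, D.top_G_mul, mul_sub, (D.commute_z _).left_comm,
    (D.commute_f _).left_comm]

theorem reducedMul_sub_correction_zero (hN : 0 < N) (p : P) :
    D.reducedMul p - D.correction q 0 p = G 0 * (D.K * D.top p) := by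
  rw [reducedMul_apply, correction_apply, scaledInvProd, one_mul, one_mul, mul_sub,
    ← mul_assoc D.z, D.z_mul_K hN, add_mul, mul_assoc]
  abel

theorem reducedMul_K_mul_top (hN : 0 < N) (p : P) :
    D.reducedMul (D.K * D.top p) = G 0 * (D.K * D.top p) := by
  rw [reducedMul_apply, D.top_K_mul_top, ← mul_assoc, D.z_mul_K hN, add_mul, mul_assoc,
    add_sub_cancel_left]

theorem correction_zero_K_mul_top (hN : 0 < N) (p : P) :
    D.correction q 0 (D.K * D.top p) = 0 := by
  have h := reducedMul_sub_correction_zero (D := D) (q := q) hN (D.K * D.top p)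
  rwa [reducedMul_K_mul_top hN, D.top_K_mul_top, sub_eq_self] at h

theorem mul_correction {x : P} {l j : ℕ} (hx : Commute x (G 0))
    (h : x * scaledInvProd q G j = scaledInvProd q G j * G l) (p : P) :
    x * D.correction q j p = D.correction q j (G l * p) := by
  rw [correction_apply, correction_apply, D.top_G_mul, (D.commute_z x).left_comm, mul_sub,
    (D.commute_K hx).left_comm, ← mul_assoc x, ← mul_assoc x, h, mul_assoc, mul_assoc]

theorem correction_generator_mul (j : ℕ) (p : P) :
    D.correction q j (G (j + 1) * p) =
      D.correction q (j + 1) p + (q - 1) • D.correction q j p := by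
  simp only [correction_apply, D.top_G_mul]
  simp only [← mul_assoc (scaledInvProd q G j), scaledInvProd_mul_generator, add_mul, mul_add,
    mul_sub, smul_mul_assoc, mul_smul_comm]
  module

theorem correction_succ_generator_mul {v : Fin m → k} (hG : HeckeRelations v q N G) {j : ℕ}
    (h : j + 1 < N) (p : P) :
    D.correction q (j + 1) (G (j + 1) * p) = q • D.correction q j p := by
  simp only [correction_apply, D.top_G_mul]
  simp only [← mul_assoc (scaledInvProd q G _), scaledInvProd_succ_mul_generator hG h, mul_sub,
    smul_mul_assoc, mul_smul_comm, smul_sub]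

variable {v : Fin m → k}

theorem inducedT_inducedX_comm (hG : HeckeRelations v q N G) {a i : ℕ} (h₁ : 1 ≤ a) (ha : a < N)
    (hi : i ≤ N) (w : ℕ → P) :
    inducedT q G a (D.inducedX q w) i = D.inducedX q (inducedT q G a w) i := by
  rcases i with _ | j
  · simp only [inducedT_apply_of_lt _ h₁, inducedX_apply_zero, G_mul_reducedMul]
  obtain h | rfl | rfl | h : j + 1 < a ∨ j + 1 = a ∨ j = a ∨ a < j := by omega
  · have hcomm : Commute (G a) (scaledInvProd q G j) :=
      commute_scaledInvProd fun l _ _ => (hG.commute l a (by omega) ha).symm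
    have hcomm₀ : Commute (G a) (G 0) := (hG.commute 0 a (by omega) ha).symm
    simp only [inducedT_apply_of_lt _ h, inducedT_apply_of_lt _ h₁,
      inducedX_apply_succ _ _ _ hi, mul_sub, mul_smul_comm, mul_correction hcomm₀ hcomm.eq,
      hcomm₀.left_comm]
  · simp only [inducedT_apply_self, inducedT_apply_of_lt _ h₁, inducedX_apply_succ _ _ _ ha,
      inducedX_apply_succ _ _ _ hi, correction_generator_mul, mul_add, mul_smul_comm]
    module
  · obtain ⟨b, rfl⟩ : ∃ b, j = b + 1 := ⟨j - 1, by omega⟩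
    simp only [inducedT_apply_succ, inducedT_apply_of_lt _ h₁, inducedX_apply_succ _ _ _ hi,
      inducedX_apply_succ _ _ _ (show b < N by omega), correction_succ_generator_mul hG ha,
      mul_smul_comm]
    module
  · have hcomm₀ : Commute (G (a + 1)) (G 0) := (hG.commute 0 (a + 1) (by omega) (by omega)).symm
    simp only [inducedT_apply_of_gt _ (show a + 1 < j + 1 by omega), inducedT_apply_of_lt _ h₁,
      inducedX_apply_succ _ _ _ hi, mul_sub, mul_smul_comm,
      mul_correction hcomm₀ (generator_succ_mul_scaledInvProd hG h₁ h hi), hcomm₀.left_comm]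

theorem braid_four_K [NeZero q] (hG : HeckeRelations v q N G) (h : 1 < N) :
    G 0 * G 1 * D.K * scaledInv q G 1 = scaledInv q G 1 * D.K * G 1 * G 0 := by
  have hcomm : Commute (G 1 * G 0 * G 1) D.K := D.commute_K <| by
    rw [commute_iff_eq, ← hG.braid_four h]
    simp only [mul_assoc]
  have conj : scaledInv q G 1 * (G 1 * G 0 * G 1 * D.K) * scaledInv q G 1 =
      scaledInv q G 1 * (D.K * (G 1 * G 0 * G 1)) * scaledInv q G 1 := by rw [hcomm.eq]
  have conj_left : scaledInv q G 1 * (G 1 * G 0 * G 1 * D.K) * scaledInv q G 1 =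
      (scaledInv q G 1 * G 1) * (G 0 * G 1 * D.K * scaledInv q G 1) := by simp only [mul_assoc]
  have conj_right : scaledInv q G 1 * (D.K * (G 1 * G 0 * G 1)) * scaledInv q G 1 =
      scaledInv q G 1 * D.K * G 1 * G 0 * (G 1 * scaledInv q G 1) := by simp only [mul_assoc]
  rw [conj_left, conj_right, scaledInv_mul hG le_rfl h, mul_scaledInv hG le_rfl h, smul_mul_assoc,
    one_mul, mul_smul_comm, mul_one] at conj
  exact smul_right_injective P (NeZero.ne q) conj

theorem braid_four_K_commutator [NeZero q] (hG : HeckeRelations v q N G) (h : 1 < N) :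
    G 0 * G 1 * D.K * scaledInv q G 1 + (q - 1) • (D.K * scaledInv q G 1 * G 0) =
      G 1 * D.K * scaledInv q G 1 * G 0 + (q - 1) • (scaledInv q G 1 * G 0 * D.K) := by
  rw [braid_four_K hG h, mul_assoc _ (G 0) D.K, (D.commute_K (Commute.refl (G 0))).eq]
  simp only [scaledInv, mul_sub, sub_mul, smul_mul_assoc, mul_smul_comm, one_mul, mul_one,
    ← mul_assoc]
  module

theorem mul_mul_correction_succ [NeZero q] (hG : HeckeRelations v q N G) {j : ℕ} (hj : j + 1 < N)
    (p : P) :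
    G 0 * (G 1 * D.correction q (j + 1) p) +
        (q - 1) • D.correction q (j + 1) (G 0 * (D.K * D.top p)) =
      G 1 * D.correction q (j + 1) (G 0 * p) := by
  obtain ⟨t, ht, hcomm⟩ := exists_scaledInvProd_succ_eq (q := q) hG hj
  have h₁ : 1 < N := by omega
  have linear_part : G 0 * (G 1 * (scaledInv q G 1 * (t * p))) =
      G 1 * (scaledInv q G 1 * (t * (G 0 * p))) := by
    simp only [← mul_assoc (G 1), mul_scaledInv hG le_rfl h₁, smul_mul_assoc, one_mul,
      mul_smul_comm, hcomm.left_comm]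
  have top_part := congrArg (· * (t * D.top p)) (braid_four_K_commutator (D := D) hG h₁)
  simp only [add_mul, smul_mul_assoc, mul_assoc] at top_part
  have top_part' := congrArg (D.z * ·) top_part
  simp only [correction_apply, D.top_G_mul, D.top_K_mul_top, ht, mul_assoc, mul_sub,
    (D.commute_z (G _)).left_comm, mul_add, mul_smul_comm, hcomm.left_comm,
    (D.commute_K hcomm).left_comm, linear_part] at top_part' ⊢
  linear_combination (norm := module) -top_part'

theorem inducedT_inducedX_inducedT_apply_zero (hN : 0 < N) {u : ℕ → P} (hu : u 0 = 0) :
    inducedT q G 0 (D.inducedX q (inducedT q G 0 u)) 0 =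
      (q - 1) • (G 0 * (D.K * D.top (u 1))) := by
  rw [← reducedMul_sub_correction_zero (q := q) hN, inducedT_apply_self,
    inducedX_apply_succ _ _ _ hN, inducedX_apply_zero, inducedT_apply_self, inducedT_apply_succ, hu]
  simp only [smul_zero, add_zero, mul_zero, zero_add]
  module

theorem inducedT_inducedX_inducedT_apply_one {u : ℕ → P} (hu : u 0 = 0) :
    inducedT q G 0 (D.inducedX q (inducedT q G 0 u)) 1 = q • D.reducedMul (u 1) := by
  rw [← zero_add 1, inducedT_apply_succ, inducedX_apply_zero, inducedT_apply_self, hu, smul_zero,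
    add_zero]

theorem inducedT_inducedX_inducedT_apply_add_two {u : ℕ → P} (hu : u 0 = 0) {j : ℕ}
    (hj : j + 1 < N) :
    inducedT q G 0 (D.inducedX q (inducedT q G 0 u)) (j + 2) =
      G 1 * (G 0 * (G 1 * u (j + 2)) - (q - 1) • D.correction q (j + 1) (u 1)) := by
  rw [inducedT_apply_of_gt _ (by omega), inducedX_apply_succ _ _ _ hj, inducedT_apply_self, hu,
    inducedT_apply_of_gt _ (by omega), smul_zero, add_zero]

theorem inducedX_inducedT_braid_four [NeZero q] (hG : HeckeRelations v q N G) (hN : 0 < N) {i : ℕ}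
    (hi : i ≤ N) {u : ℕ → P} (hu : u 0 = 0) :
    D.inducedX q (inducedT q G 0 (D.inducedX q (inducedT q G 0 u))) i =
      inducedT q G 0 (D.inducedX q (inducedT q G 0 (D.inducedX q u))) i := by
  have hXu₀ : D.inducedX q u 0 = 0 := by rw [inducedX_apply_zero, hu, map_zero]
  have hXu : ∀ j, j < N → D.inducedX q u (j + 1) = G 0 * u (j + 1) := fun j hj => by
    rw [inducedX_apply_succ _ _ _ hj, hu, map_zero, smul_zero, sub_zero]
  have hcomm : Commute (G 0) D.K := D.commute_K (Commute.refl _)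
  rcases i with _ | _ | j
  · rw [inducedX_apply_zero, inducedT_inducedX_inducedT_apply_zero hN hu,
      inducedT_inducedX_inducedT_apply_zero hN hXu₀, hXu 0 hN, D.top_G_mul, map_smul,
      ← G_mul_reducedMul, reducedMul_K_mul_top hN, hcomm.left_comm]
  · rw [inducedX_apply_succ _ _ _ hi, inducedT_inducedX_inducedT_apply_zero hN hu,
      inducedT_inducedX_inducedT_apply_one hu, inducedT_inducedX_inducedT_apply_one hXu₀,
      hXu 0 hN, map_smul, hcomm.left_comm, ← D.top_G_mul,
      correction_zero_K_mul_top hN, mul_smul_comm, G_mul_reducedMul]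
    simp only [smul_zero, sub_zero, zero_add]
  · have hbraid : G 0 * (G 1 * (G 0 * (G 1 * u (j + 2)))) =
        G 1 * (G 0 * (G 1 * (G 0 * u (j + 2)))) := by
      simp only [← mul_assoc, hG.braid_four (show 1 < N by omega)]
    rw [inducedX_apply_succ _ _ _ hi, inducedT_inducedX_inducedT_apply_zero hN hu,
      inducedT_inducedX_inducedT_apply_add_two hu hi,
      inducedT_inducedX_inducedT_apply_add_two hXu₀ hi, hXu 0 hN, hXu (j + 1) hi, map_smul]
    simp only [mul_sub, mul_smul_comm, zero_add, ← mul_mul_correction_succ hG hi, hbraid]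
    module

end ReductionDatum

end InducedX

section CyclotomicRelation

open Polynomial

variable {k : Type} [Field k]

theorem commute_aeval {A : Type*} [Ring A] [Algebra k A] {x y : A} (h : Commute x y) (p : k[X]) :
    Commute x (aeval y p) := by
  induction p using Polynomial.induction_on' with
  | add p r hp hr => rw [map_add]; exact hp.add_right hr
  | monomial j c =>
    rw [aeval_monomial]
    exact (Algebra.commute_algebraMap_right c x).mul_right (h.pow_right j)

theorem apply_aeval_of_intertwines {V W : Type*} [AddCommGroup V] [Module k V] [AddCommGroup W]
    [Module k W] {a : Module.End k V} {b : Module.End k W} {φ : V →ₗ[k] W}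
    (h : ∀ x, φ (a x) = b (φ x)) (p : k[X]) (x : V) : φ (aeval a p x) = aeval b p (φ x) := by
  induction p using Polynomial.induction_on generalizing x with
  | C c => simp
  | add p r hp hr => simp [hp, hr]
  | monomial j c ih => simpa [pow_succ, ← mul_assoc, h] using ih (a x)

namespace ReductionDatum

variable {P : Type*} [Ring P] [Algebra k P] {N : ℕ} {G : ℕ → P} (D : ReductionDatum k N G) (q : k)

theorem f_dvd_aeval_reducedMul_sub (p : k[X]) (u : P) :
    D.f ∣ aeval D.reducedMul p u - aeval D.z p * u := by
  induction p using Polynomial.induction_on generalizing u with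
  | C c => simp [Algebra.smul_def]
  | add p r hp hr =>
    convert dvd_add (hp u) (hr u) using 1
    simp only [map_add, LinearMap.add_apply, add_mul]
    abel
  | monomial j c ih =>
    have step : aeval D.reducedMul (C c * X ^ (j + 1)) u - aeval D.z (C c * X ^ (j + 1)) * u =
        aeval D.reducedMul (C c * X ^ j) (D.reducedMul u) -
          aeval D.z (C c * X ^ j) * D.reducedMul u -
          D.f * (aeval D.z (C c * X ^ j) * D.top u) := by
      rw [← ((D.commute_f _).left_comm _), reducedMul_apply]
      simp only [pow_succ, ← mul_assoc, map_mul _ _ X, aeval_X, Module.End.mul_apply,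
        reducedMul_apply, mul_sub]
      abel
    rw [step]
    exact dvd_sub (ih _) (dvd_mul_right _ _)

/-- The linear form `w ↦ (z - G 0) w_{j+1} + (q - 1) z S_j w_0`, which turns the action of `a_1`
into left multiplication by `G 0`. -/
def eigenform (j : ℕ) : (ℕ → P) →ₗ[k] P :=
  LinearMap.mulLeft k (D.z - G 0) ∘ₗ LinearMap.proj (j + 1) +
    (q - 1) • LinearMap.mulLeft k (D.z * scaledInvProd q G j) ∘ₗ LinearMap.proj 0

theorem eigenform_apply (j : ℕ) (w : ℕ → P) : D.eigenform q j w =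
    (D.z - G 0) * w (j + 1) + (q - 1) • (D.z * scaledInvProd q G j * w 0) := rfl

theorem eigenform_inducedX {j : ℕ} (hj : j < N) (w : ℕ → P) :
    D.eigenform q j (D.inducedX q w) = G 0 * D.eigenform q j w := by
  have hf : ∀ x, D.f * x = D.z * (D.K * x) - G 0 * (D.K * x) := fun x => by
    rw [← mul_assoc D.z, D.z_mul_K (by omega), add_mul, mul_assoc, add_sub_cancel_right]
  simp only [eigenform_apply, inducedX_apply_zero, inducedX_apply_succ D q w hj, correction_apply,
    reducedMul_apply, sub_mul, mul_sub, mul_add, mul_smul_comm, mul_assoc,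
    (D.commute_z (G 0)).left_comm, (D.commute_z (scaledInvProd q G j)).left_comm,
    (D.commute_f (scaledInvProd q G j)).left_comm]
  simp only [hf, mul_sub]
  module

end ReductionDatum

end CyclotomicRelation

section DifferenceQuotient

open Polynomial

variable {k : Type} [Field k] {B : Type*} [Ring B] [Algebra k B]

/-- The polynomial `(f(X) - f(y)) / (X - y)`. The division is carried out with an indeterminate in
place of `y`, over the commutative ring `k[X]`. -/
def differenceQuotient (f : k[X]) (y : B) : B[X] :=
  ((f.map C) /ₘ (X - C X)).map (aeval y : k[X] →ₐ[k] B).toRingHom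

theorem map_algebraMap_eq_aeval_X (f : k[X]) :
    f.map (algebraMap k B) = aeval (X : B[X]) f := rfl

theorem X_sub_C_mul_differenceQuotient (f : k[X]) (y : B) :
    (X - C y) * differenceQuotient f y = f.map (algebraMap k B) - C (aeval y f) := by
  have h := congrArg (map (aeval y : k[X] →ₐ[k] B).toRingHom)
    (X_sub_C_mul_divByMonic_eq_sub_modByMonic (f.map C) X)
  have hcomp : (aeval y : k[X] →ₐ[k] B).toRingHom.comp C = algebraMap k B :=
    (aeval y : k[X] →ₐ[k] B).comp_algebraMap
  rw [modByMonic_X_sub_C_eq_C_eval, eval_map, eval₂_C_X, Polynomial.map_mul, Polynomial.map_sub,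
    Polynomial.map_sub, map_X, map_C, map_C, map_map, hcomp] at h
  simpa only [differenceQuotient, AlgHom.toRingHom_eq_coe, RingHom.coe_coe, aeval_X] using h

theorem coeff_differenceQuotient {f : k[X]} (hf : f.Monic) (hd : f.natDegree ≠ 0) (y : B) :
    (differenceQuotient f y).coeff (f.natDegree - 1) = 1 := by
  have hdeg : ((f.map C) /ₘ (X - C (X : k[X]))).natDegree = f.natDegree - 1 := by
    rw [natDegree_divByMonic _ (monic_X_sub_C _), natDegree_X_sub_C, hf.natDegree_map]
  have hlead : ((f.map C) /ₘ (X - C (X : k[X]))).leadingCoeff = 1 := by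
    rw [leadingCoeff_divByMonic_X_sub_C, hf.map C]
    exact degree_ne_of_natDegree_ne (by rwa [hf.natDegree_map])
  rw [differenceQuotient, coeff_map, ← hdeg, coeff_natDegree, hlead, map_one]

theorem natDegree_differenceQuotient_le (f : k[X]) (y : B) :
    (differenceQuotient f y).natDegree ≤ f.natDegree - 1 := by
  refine (natDegree_map_le ..).trans ?_
  rw [natDegree_divByMonic _ (monic_X_sub_C _), natDegree_X_sub_C]
  exact Nat.sub_le_sub_right (natDegree_map_le ..) 1

theorem commute_differenceQuotient {x : B[X]} {y : B} (h : Commute x (C y)) (f : k[X]) :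
    Commute x (differenceQuotient f y) := by
  rw [differenceQuotient]
  induction (f.map C) /ₘ (X - C (X : k[X])) using Polynomial.induction_on' with
  | add p r hp hr => rw [Polynomial.map_add]; exact hp.add_right hr
  | monomial j c =>
    rw [map_monomial, ← C_mul_X_pow_eq_monomial]
    refine Commute.mul_right ?_ (commute_X_pow x j).symm
    have hc : C (aeval y c) = aeval (C y) c := (aeval_algHom_apply CAlgHom y c).symm
    exact hc ▸ commute_aeval h c

theorem map_differenceQuotient {B' : Type*} [Ring B'] [Algebra k B'] (φ : B →ₐ[k] B') (f : k[X])
    (y : B) : (differenceQuotient f y).map φ.toRingHom = differenceQuotient f (φ y) := by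
  rw [differenceQuotient, differenceQuotient, map_map, aeval_algHom]
  rfl

theorem degree_sub_mul_C_coeff_lt {p₀ p : B[X]} {d : ℕ} (h₀ : p₀.natDegree ≤ d)
    (hd : p₀.coeff d = 1) (hp : p.natDegree ≤ d) : (p - p₀ * C (p.coeff d)).degree < d := by
  rw [degree_lt_iff_coeff_zero]
  intro j hj
  rw [coeff_sub, coeff_mul_C]
  obtain rfl | hj := hj.eq_or_lt
  · rw [hd, one_mul, sub_self]
  · rw [coeff_eq_zero_of_natDegree_lt (hp.trans_lt hj),
      coeff_eq_zero_of_natDegree_lt (h₀.trans_lt hj), zero_mul, sub_zero]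

end DifferenceQuotient

section InducedModule

open Polynomial

variable {k : Type} [Field k] {m : ℕ}

/-- The `k`-module `⨁ i ≤ N, B[X]_{<m}` of sequences of polynomials, the `i`-th summand standing for
`a_{i+2} ⋯ a_{N+1} p(L_{N+1})`. For `B = H_N` it is a model of `H_{N+1}`. -/
def inducedModule (k B : Type*) [Field k] [Ring B] [Algebra k B] (m N : ℕ) :
    Submodule k (ℕ → B[X]) :=
  Submodule.pi Set.univ fun i => if i ≤ N then (degreeLT B m).restrictScalars k else ⊥

variable {B : Type*} [Ring B] [Algebra k B] {v : Fin m → k} {q : k} {N : ℕ} {g : ℕ → B}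

theorem mem_inducedModule {w : ℕ → B[X]} :
    w ∈ inducedModule k B m N ↔ (∀ i, N < i → w i = 0) ∧ ∀ i, (w i).degree < m := by
  simp only [inducedModule, Submodule.mem_pi, Set.mem_univ, true_imp_iff, ← forall_and]
  refine forall_congr' fun i => ?_
  split_ifs with hi
  · simp [mem_degreeLT, hi]
  · simp +contextual [not_le.1 hi]

theorem inducedModule_ext {w w' : inducedModule k B m N} (h : ∀ i ≤ N, w.1 i = w'.1 i) :
    w = w' := by
  refine Subtype.ext (funext fun i => ?_)
  obtain hi | hi := le_or_gt i N
  · exact h i hi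
  · rw [(mem_inducedModule.1 w.2).1 i hi, (mem_inducedModule.1 w'.2).1 i hi]

/-- The vector of the induced module whose only nonzero component is `p` in the summand `j`. -/
def inducedSingle {j : ℕ} (hj : j ≤ N) {p : B[X]} (hp : p.degree < m) : inducedModule k B m N :=
  ⟨Pi.single j p, mem_inducedModule.2 ⟨fun i hi => Pi.single_eq_of_ne (by omega) _, fun i => by
    obtain rfl | h := eq_or_ne i j
    · rwa [Pi.single_eq_same]
    · rw [Pi.single_eq_of_ne h, degree_zero]
      exact WithBot.bot_lt_coe m⟩⟩

theorem coe_inducedSingle {j : ℕ} (hj : j ≤ N) {p : B[X]} (hp : p.degree < m) :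
    (inducedSingle (k := k) hj hp : ℕ → B[X]) = Pi.single j p := rfl

theorem coeff_differenceQuotient_parameterPoly [NeZero m] (v : Fin m → k) (y : B) :
    (differenceQuotient (parameterPoly v) y).coeff (m - 1) = 1 := by
  have h := coeff_differenceQuotient (monic_parameterPoly v)
    (by rw [natDegree_parameterPoly]; exact NeZero.ne m) y
  rwa [natDegree_parameterPoly] at h

/-- The reduction datum of `B[X]` and `f = (X - v_1) ⋯ (X - v_m)`. -/
def polynomialDatum [NeZero m] (hg : HeckeRelations v q N g) :
    ReductionDatum k N fun l => (C (g l) : B[X]) where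
  z := X
  f := (parameterPoly v).map (algebraMap k B)
  K := differenceQuotient (parameterPoly v) (g 0)
  top := CAlgHom.toLinearMap ∘ₗ (lcoeff B (m - 1)).restrictScalars k
  commute_z x := (commute_X x).symm
  commute_f x := by
    rw [map_algebraMap_eq_aeval_X]
    exact commute_aeval (commute_X x).symm _
  commute_K h := commute_differenceQuotient h _
  z_mul_K h := by
    rw [← sub_eq_iff_eq_add, ← sub_mul, X_sub_C_mul_differenceQuotient, hg.cyclotomic h, C_0,
      sub_zero]
  top_G_mul l p := by simp
  top_K_mul_top p := by simp [coeff_differenceQuotient_parameterPoly]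

end InducedModule

section InducedAction

open Polynomial

variable {k : Type} [Field k] {m : ℕ} {B : Type*} [Ring B] [Algebra k B] {v : Fin m → k} {q : k}
  {N : ℕ} {g : ℕ → B}

theorem degree_C_mul_lt {p : B[X]} {d : ℕ} (hp : p.degree < d) (b : B) : (C b * p).degree < d := by
  rw [degree_lt_iff_coeff_zero] at hp ⊢
  intro j hj
  rw [coeff_C_mul, hp j hj, mul_zero]

theorem degree_X_mul_lt {p : B[X]} {d : ℕ} [NeZero d] (hp : p.degree < (d - 1 : ℕ)) :
    (X * p).degree < (d : WithBot ℕ) := by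
  rw [degree_lt_iff_coeff_zero] at hp ⊢
  intro j hj
  obtain ⟨i, rfl⟩ : ∃ i, j = i + 1 := ⟨j - 1, by have := NeZero.ne d; omega⟩
  rw [coeff_X_mul, hp i (by omega)]

theorem natDegree_le_sub_one_of_degree_lt {p : B[X]} {d : ℕ} (hp : p.degree < d) :
    p.natDegree ≤ d - 1 :=
  natDegree_le_iff_coeff_eq_zero.2 fun j hj =>
    coeff_eq_zero_of_degree_lt (hp.trans_le (by exact_mod_cast Nat.le_of_pred_lt hj))

theorem inducedT_mem (l : ℕ) (hl : l < N) {w : ℕ → B[X]} (hw : w ∈ inducedModule k B m N) :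
    inducedT q (fun l => C (g l)) l w ∈ inducedModule k B m N := by
  rw [mem_inducedModule] at hw ⊢
  refine ⟨fun i hi => ?_, fun i => ?_⟩
  · rw [inducedT_apply_of_gt _ (by omega), hw.1 i hi, mul_zero]
  obtain h | rfl | rfl | h : i < l ∨ i = l ∨ i = l + 1 ∨ l + 1 < i := by omega
  · rw [inducedT_apply_of_lt _ h]
    exact degree_C_mul_lt (hw.2 i) _
  · rw [inducedT_apply_self]
    exact (degree_add_le _ _).trans_lt (max_lt (hw.2 _) ((degree_smul_le _ _).trans_lt (hw.2 _)))
  · rw [inducedT_apply_succ]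
    exact (degree_smul_le _ _).trans_lt (hw.2 _)
  · rw [inducedT_apply_of_gt _ h]
    exact degree_C_mul_lt (hw.2 i) _

variable [NeZero m] (hg : HeckeRelations v q N g)

theorem polynomialDatum_top_apply (p : B[X]) :
    (polynomialDatum hg).top p = C (p.coeff (m - 1)) := rfl

theorem degree_reducedMul_lt {p : B[X]} (hp : p.degree < m) :
    ((polynomialDatum hg).reducedMul p).degree < m := by
  have hm : 1 ≤ m := NeZero.one_le
  have hcoeff : (X * p).coeff m = p.coeff (m - 1) := by
    conv_lhs => rw [← Nat.sub_add_cancel hm, coeff_X_mul]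
  have hf : ((parameterPoly v).map (algebraMap k B)).coeff m = 1 := by
    have h := (monic_parameterPoly v).coeff_natDegree
    rw [natDegree_parameterPoly] at h
    rw [coeff_map, h, map_one]
  have hXp : (X * p).natDegree ≤ m := by
    have := natDegree_mul_le_of_le natDegree_X_le (natDegree_le_sub_one_of_degree_lt hp)
    omega
  have h := degree_sub_mul_C_coeff_lt
    (natDegree_map_le.trans_eq (natDegree_parameterPoly v)) hf hXp
  rwa [hcoeff] at h

theorem degree_correction_lt (j : ℕ) {p : B[X]} (hp : p.degree < m) :
    ((polynomialDatum hg).correction q j p).degree < m := by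
  have hS : scaledInvProd q (fun l => (C (g l) : B[X])) j = C (scaledInvProd q g j) :=
    (scaledInvProd_map (φ := CAlgHom) q fun _ _ => rfl).symm
  have hK := natDegree_differenceQuotient_le (parameterPoly v) (g 0)
  rw [natDegree_parameterPoly] at hK
  have h := degree_X_mul_lt <| degree_sub_mul_C_coeff_lt hK
    (coeff_differenceQuotient_parameterPoly v (g 0))
    (natDegree_le_sub_one_of_degree_lt (degree_C_mul_lt hp (scaledInvProd q g j)))
  rw [coeff_C_mul, C_mul, ← hS, ← polynomialDatum_top_apply hg] at h
  rwa [ReductionDatum.correction_apply]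

theorem inducedX_mem {w : ℕ → B[X]} (hw : w ∈ inducedModule k B m N) :
    (polynomialDatum hg).inducedX q w ∈ inducedModule k B m N := by
  rw [mem_inducedModule] at hw ⊢
  refine ⟨fun i hi => ReductionDatum.inducedX_apply_of_gt _ _ _ hi, fun i => ?_⟩
  obtain hi | hi := lt_or_ge N i
  · rw [ReductionDatum.inducedX_apply_of_gt _ _ _ hi, degree_zero]
    exact WithBot.bot_lt_coe m
  rcases i with _ | j
  · exact degree_reducedMul_lt hg (hw.2 0)
  · rw [ReductionDatum.inducedX_apply_succ _ _ _ hi]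
    exact (degree_sub_le _ _).trans_lt (max_lt (degree_C_mul_lt (hw.2 _) _)
      ((degree_smul_le _ _).trans_lt (degree_correction_lt hg j (hw.2 0))))

/-- The operators on sequences of polynomials through which the generators of `H_{N+1}` act on the
induced module. -/
def inducedOperator : ℕ → Module.End k (ℕ → B[X])
  | 0 => (polynomialDatum hg).inducedX q
  | l + 1 => inducedT q (fun l => C (g l)) l

theorem inducedOperator_mem {l : ℕ} (hl : l ≤ N) :
    ∀ w ∈ inducedModule k B m N, inducedOperator hg l w ∈ inducedModule k B m N := fun _ hw =>
  match l with
  | 0 => inducedX_mem hg hw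
  | l + 1 => inducedT_mem l hl hw

/-- The action of the generators of `H_{N+1}` on the induced module; `inducedAction hg l` is the
action of `a_{l+1}` for `l ≤ N`, and `0` otherwise. -/
def inducedAction (l : ℕ) : Module.End k (inducedModule k B m N) :=
  if hl : l ≤ N then (inducedOperator hg l).restrict (inducedOperator_mem hg hl) else 0

theorem coe_inducedAction {l : ℕ} (hl : l ≤ N) (w : inducedModule k B m N) :
    (inducedAction hg l w : ℕ → B[X]) = inducedOperator hg l w := by
  rw [inducedAction, dif_pos hl, LinearMap.coe_restrict_apply]

theorem coe_inducedAction_zero (w : inducedModule k B m N) :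
    (inducedAction hg 0 w : ℕ → B[X]) = (polynomialDatum hg).inducedX q w :=
  coe_inducedAction hg (Nat.zero_le N) w

theorem coe_inducedAction_succ {l : ℕ} (hl : l < N) (w : inducedModule k B m N) :
    (inducedAction hg (l + 1) w : ℕ → B[X]) = inducedT q (fun l => C (g l)) l w :=
  coe_inducedAction hg hl w

end InducedAction

section InducedRelations

open Polynomial

variable {k : Type} [Field k] {m : ℕ} {B : Type*} [Ring B] [Algebra k B] {v : Fin m → k}
  {q : k} {N : ℕ} {g : ℕ → B}

theorem HeckeRelations.map_C (hg : HeckeRelations v q N g) :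
    HeckeRelations v q N fun l => (C (g l) : B[X]) :=
  hg.map CAlgHom

variable [NeZero m] (hg : HeckeRelations v q N g)

theorem inducedAction_quadratic {l : ℕ} (hl : l < N) :
    inducedAction hg (l + 1) * inducedAction hg (l + 1) =
      (q - 1) • inducedAction hg (l + 1) + q • 1 := by
  refine LinearMap.ext fun w => inducedModule_ext fun i hi => ?_
  simp only [Module.End.mul_apply, LinearMap.add_apply, LinearMap.smul_apply, Module.End.one_apply,
    Submodule.coe_add, Submodule.coe_smul, Pi.add_apply, Pi.smul_apply,
    coe_inducedAction_succ hg hl]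
  exact inducedT_quadratic hg.map_C hl hi w

theorem inducedAction_commute {i j : ℕ} (hij : i + 2 ≤ j) (hj : j ≤ N) :
    Commute (inducedAction hg i) (inducedAction hg j) := by
  obtain ⟨j, rfl⟩ : ∃ j', j = j' + 1 := ⟨j - 1, by omega⟩
  refine LinearMap.ext fun w => inducedModule_ext fun c hc => ?_
  rw [Module.End.mul_apply, Module.End.mul_apply]
  rcases i with _ | i
  · simp only [coe_inducedAction_zero, coe_inducedAction_succ hg hj]
    exact (ReductionDatum.inducedT_inducedX_comm hg.map_C (by omega) hj hc w.1).symm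
  · simp only [coe_inducedAction_succ hg hj, coe_inducedAction_succ hg (show i < N by omega)]
    exact inducedT_comm hg.map_C (by omega) hj hc w.1

theorem inducedAction_braid {i : ℕ} (hi : i + 1 < N) :
    inducedAction hg (i + 2) * inducedAction hg (i + 1) * inducedAction hg (i + 2) =
      inducedAction hg (i + 1) * inducedAction hg (i + 2) * inducedAction hg (i + 1) := by
  refine LinearMap.ext fun w => inducedModule_ext fun c hc => ?_
  simp only [Module.End.mul_apply, coe_inducedAction_succ hg hi,
    coe_inducedAction_succ hg (show i < N by omega)]
  exact inducedT_braid hg.map_C hi hc w.1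

theorem exists_add_inducedAction_eq (hN : 0 < N) (w : inducedModule k B m N) :
    ∃ a u : inducedModule k B m N, a.1 0 = 0 ∧ u.1 0 = 0 ∧ w = a + inducedAction hg 1 u := by
  let u : inducedModule k B m N :=
    inducedSingle (j := 1) hN (p := w.1 0) ((mem_inducedModule.1 w.2).2 0)
  refine ⟨w - inducedAction hg 1 u, u, ?_, by simp [u, coe_inducedSingle], by abel⟩
  rw [Submodule.coe_sub, Pi.sub_apply, coe_inducedAction_succ hg hN, inducedT_apply_self]
  simp [u, coe_inducedSingle]

theorem inducedAction_braid_four_apply [NeZero q] (hN : 0 < N) {u : inducedModule k B m N}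
    (hu : u.1 0 = 0) :
    (inducedAction hg 0 * inducedAction hg 1 * inducedAction hg 0 * inducedAction hg 1) u =
      (inducedAction hg 1 * inducedAction hg 0 * inducedAction hg 1 * inducedAction hg 0) u := by
  refine inducedModule_ext fun i hi => ?_
  simp only [Module.End.mul_apply, coe_inducedAction_zero, coe_inducedAction_succ hg hN]
  exact ReductionDatum.inducedX_inducedT_braid_four hg.map_C hN hi hu

theorem braid_four_commutator_mul {A : Type*} [Ring A] [Algebra k A] {x t : A}
    (ht : t * t = (q - 1) • t + q • 1) :
    (x * t * x * t - t * x * t * x) * t =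
      (q - 1) • (x * t * x * t - t * x * t * x) - t * (x * t * x * t - t * x * t * x) := by
  have hxtx : x * t * x * t * t = (q - 1) • (x * t * x * t) + q • (x * t * x) := by
    rw [mul_assoc, ht, mul_add, mul_smul_comm, mul_smul_comm, mul_one]
  have hxtx' : t * (t * x * t * x) = (q - 1) • (t * x * t * x) + q • (x * t * x) := by
    simp only [← mul_assoc, ht, add_mul, smul_mul_assoc, one_mul]
  rw [sub_mul, mul_sub, hxtx, hxtx']
  simp only [← mul_assoc]
  module

/-- Every vector is `a + a_2 u` with `a` and `u` vanishing in the copy `0`, and the quadratic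
relation carries the difference of the two sides past `a_2`, so vectors vanishing there suffice. -/
theorem inducedAction_braid_four [NeZero q] (hN : 0 < N) :
    inducedAction hg 0 * inducedAction hg 1 * inducedAction hg 0 * inducedAction hg 1 =
      inducedAction hg 1 * inducedAction hg 0 * inducedAction hg 1 * inducedAction hg 0 := by
  rw [← sub_eq_zero]
  have hcomm := braid_four_commutator_mul (x := inducedAction hg 0)
    (inducedAction_quadratic hg hN)
  have hzero : ∀ u : inducedModule k B m N, u.1 0 = 0 →
      (inducedAction hg 0 * inducedAction hg 1 * inducedAction hg 0 * inducedAction hg 1 -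
        inducedAction hg 1 * inducedAction hg 0 * inducedAction hg 1 * inducedAction hg 0) u = 0 :=
    fun u hu => by
      rw [LinearMap.sub_apply, inducedAction_braid_four_apply hg hN hu, sub_self]
  refine LinearMap.ext fun w => ?_
  obtain ⟨a, u, ha, hu, rfl⟩ := exists_add_inducedAction_eq hg hN w
  rw [map_add, hzero a ha, zero_add, ← Module.End.mul_apply, hcomm, LinearMap.sub_apply,
    LinearMap.smul_apply, Module.End.mul_apply, hzero u hu, smul_zero, map_zero, sub_zero,
    LinearMap.zero_apply]

theorem coe_aeval_inducedAction_zero (p : k[X]) (w : inducedModule k B m N) :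
    (aeval (inducedAction hg 0) p w : ℕ → B[X]) =
      aeval ((polynomialDatum hg).inducedX q : Module.End k _) p (w : ℕ → B[X]) :=
  apply_aeval_of_intertwines (a := inducedAction hg 0)
    (b := (polynomialDatum hg).inducedX q) (φ := (inducedModule k B m N).subtype)
    (coe_inducedAction_zero hg) p w

theorem aeval_inducedAction_zero_apply_zero (w : inducedModule k B m N) :
    (aeval (inducedAction hg 0) (parameterPoly v) w : ℕ → B[X]) 0 = 0 := by
  set u := aeval (inducedAction hg 0) (parameterPoly v) w with hu_def
  have hu : u.1 0 = aeval (polynomialDatum hg).reducedMul (parameterPoly v) (w.1 0) := by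
    rw [hu_def, coe_aeval_inducedAction_zero]
    exact apply_aeval_of_intertwines (a := (polynomialDatum hg).inducedX q)
      (b := (polynomialDatum hg).reducedMul) (φ := LinearMap.proj (φ := fun _ : ℕ => B[X]) 0)
      ((polynomialDatum hg).inducedX_apply_zero q) _ _
  have hdvd : (parameterPoly v).map (algebraMap k B) ∣ u.1 0 := by
    have h := (polynomialDatum hg).f_dvd_aeval_reducedMul_sub (parameterPoly v) (w.1 0)
    rw [← hu] at h
    exact (dvd_sub_left (dvd_mul_right _ _)).1 h
  by_contra hne
  have : Nontrivial B := Polynomial.nontrivial_iff.1 (nontrivial_of_ne _ _ hne)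
  refine ((monic_parameterPoly v).map (algebraMap k B)).not_dvd_of_degree_lt hne ?_ hdvd
  rw [(monic_parameterPoly v).degree_map, degree_parameterPoly]
  exact (mem_inducedModule.1 u.2).2 0

theorem aeval_inducedAction_zero : aeval (inducedAction hg 0) (parameterPoly v) = 0 := by
  refine LinearMap.ext fun w => inducedModule_ext fun i hi => ?_
  have h₀ := aeval_inducedAction_zero_apply_zero hg w
  rcases i with _ | j
  · exact h₀
  have heigen : (polynomialDatum hg).eigenform q j
      (aeval (inducedAction hg 0) (parameterPoly v) w).1 = 0 := by
    rw [coe_aeval_inducedAction_zero, apply_aeval_of_intertwines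
      (b := Algebra.lmul k B[X] (C (g 0))) ((polynomialDatum hg).eigenform_inducedX q hi),
      aeval_algHom_apply, hg.map_C.cyclotomic (by omega), map_zero, LinearMap.zero_apply]
  rw [ReductionDatum.eigenform_apply, h₀, mul_zero, smul_zero, add_zero] at heigen
  exact (monic_X_sub_C (g 0)).mul_right_eq_zero_iff.1 heigen

theorem heckeRelations_inducedAction [NeZero q] :
    HeckeRelations v q (N + 1) (inducedAction hg) where
  cyclotomic _ := aeval_inducedAction_zero hg
  quadratic l h₁ h := by
    obtain ⟨l, rfl⟩ : ∃ l', l = l' + 1 := ⟨l - 1, by omega⟩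
    exact inducedAction_quadratic hg (by omega)
  braid_four h := inducedAction_braid_four hg (by omega)
  commute i j hij hj := inducedAction_commute hg hij (by omega)
  braid i h₁ h := by
    obtain ⟨i, rfl⟩ : ∃ i', i = i' + 1 := ⟨i - 1, by omega⟩
    exact inducedAction_braid hg (by omega)

end InducedRelations

section ConditionalExpectation

open Polynomial

variable {k : Type} [Field k] {m : ℕ}

/-- Right multiplication by `b ∈ B` on the induced module. -/
def inducedMulRight {B : Type*} [Ring B] [Algebra k B] {N : ℕ} (b : B) :
    Module.End k (inducedModule k B m N) :=
  ((LinearMap.mulRight k (C b)).compLeft ℕ).restrict fun w hw => by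
    rw [mem_inducedModule] at hw ⊢
    refine ⟨fun i hi => by simp [hw.1 i hi], fun i => ?_⟩
    refine (degree_lt_iff_coeff_zero _ _).2 fun j hj => ?_
    simp [coeff_eq_zero_of_degree_lt ((hw.2 i).trans_le (Nat.cast_le.2 hj))]

theorem inducedMulRight_apply {B : Type*} [Ring B] [Algebra k B] {N : ℕ} (b : B)
    (w : inducedModule k B m N) (i : ℕ) : (inducedMulRight b w).1 i = w.1 i * C b := rfl

variable (v : Fin m → k) (q : k)

/-- The natural map from `H_N` to `H_{N+1}`. -/
def inclusion (N : ℕ) : CH k m N v q →ₐ[k] CH k m (N + 1) v q :=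
  ((heckeRelations_generator v q (N + 1)).mono (Nat.le_succ N)).lift

theorem inclusion_generator {N l : ℕ} (hl : l < N) :
    inclusion v q N (generator v q N l) = generator v q (N + 1) l :=
  HeckeRelations.lift_generator _ hl

variable [NeZero m]

theorem degree_one_lt {B : Type*} [Ring B] : (1 : B[X]).degree < m :=
  degree_one_le.trans_lt (Nat.cast_pos.2 (NeZero.pos m))

/-- The vector of the induced module of `H_{N+1}` standing for `1 ∈ H_{N+1}`. -/
def cyclicVector (N : ℕ) : inducedModule k (CH k m N v q) m N :=
  inducedSingle le_rfl degree_one_lt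

variable [NeZero q]

/-- The representation of `H_{N+1}` on its induced module. -/
def inducedRep (N : ℕ) :
    CH k m (N + 1) v q →ₐ[k] Module.End k (inducedModule k (CH k m N v q) m N) :=
  (heckeRelations_inducedAction (heckeRelations_generator v q N)).lift

theorem coe_inducedRep_generator_zero {N : ℕ} (w : inducedModule k (CH k m N v q) m N) :
    (inducedRep v q N (generator v q (N + 1) 0) w).1 =
      (polynomialDatum (heckeRelations_generator v q N)).inducedX q w.1 := by
  rw [inducedRep, HeckeRelations.lift_generator _ (Nat.succ_pos N), coe_inducedAction_zero]

theorem coe_inducedRep_generator_succ {N l : ℕ} (hl : l < N)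
    (w : inducedModule k (CH k m N v q) m N) :
    (inducedRep v q N (generator v q (N + 1) (l + 1)) w).1 =
      inducedT q (fun l => C (generator v q N l)) l w.1 := by
  rw [inducedRep, HeckeRelations.lift_generator _ (by omega), coe_inducedAction_succ _ hl]

theorem inducedRep_algebraMap_apply {N : ℕ} (c : k) (w : inducedModule k (CH k m N v q) m N) :
    inducedRep v q N (algebraMap k _ c) w = c • w := by
  rw [AlgHom.commutes, Module.algebraMap_end_apply]

theorem inducedRep_inducedMulRight {N : ℕ} (h : CH k m (N + 1) v q) (b : CH k m N v q)
    (w : inducedModule k (CH k m N v q) m N) :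
    inducedRep v q N h (inducedMulRight b w) = inducedMulRight b (inducedRep v q N h w) := by
  induction h using generator_induction generalizing w with
  | algebraMap c => rw [inducedRep_algebraMap_apply, inducedRep_algebraMap_apply, map_smul]
  | generator l hl =>
    refine inducedModule_ext fun i _ => ?_
    rw [inducedMulRight_apply]
    rcases l with _ | l
    · rw [coe_inducedRep_generator_zero, coe_inducedRep_generator_zero]
      refine ReductionDatum.inducedX_mul_right _ q (b := C b) (fun p => ?_) w.1 i
      rw [polynomialDatum_top_apply, polynomialDatum_top_apply, coeff_mul_C, C_mul]
    · rw [coe_inducedRep_generator_succ v q (by omega),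
        coe_inducedRep_generator_succ v q (by omega)]
      exact inducedT_mul_right l w.1 (C b) i
  | mul x y hx hy => rw [map_mul, Module.End.mul_apply, hy, hx, Module.End.mul_apply]
  | add x y hx hy => rw [map_add, LinearMap.add_apply, hx, hy, LinearMap.add_apply, map_add]

/-- The conditional expectation `H_{N+1} → H_N`: the constant coefficient of the summand
`H_N[L_{N+1}]` of the induced module. -/
def condExp (N : ℕ) : CH k m (N + 1) v q →ₗ[k] CH k m N v q where
  toFun h := ((inducedRep v q N h (cyclicVector v q N)).1 N).coeff 0
  map_add' x y := by simp
  map_smul' c x := by simp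

theorem condExp_apply {N : ℕ} (h : CH k m (N + 1) v q) :
    condExp v q N h = ((inducedRep v q N h (cyclicVector v q N)).1 N).coeff 0 := rfl

theorem inducedRep_inclusion_generator_cyclicVector {N l : ℕ} (hl : l < N) :
    inducedRep v q N (inclusion v q N (generator v q N l)) (cyclicVector v q N) =
      inducedMulRight (generator v q N l) (cyclicVector v q N) := by
  obtain ⟨N, rfl⟩ : ∃ n, N = n + 1 := ⟨N - 1, by omega⟩
  have hsingle : (inducedRep v q (N + 1) (generator v q (N + 2) l) (cyclicVector v q (N + 1))).1 =
      Pi.single (N + 1) (C (generator v q (N + 1) l) * 1) := by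
    rcases l with _ | l
    · rw [coe_inducedRep_generator_zero, cyclicVector, coe_inducedSingle]
      exact ReductionDatum.inducedX_single _ q (Nat.lt_succ_self N) 1
    · rw [coe_inducedRep_generator_succ v q (by omega), cyclicVector, coe_inducedSingle]
      exact inducedT_single_of_gt (by omega) 1
  refine inducedModule_ext fun i _ => ?_
  rw [inclusion_generator v q hl, hsingle, inducedMulRight_apply, cyclicVector, coe_inducedSingle]
  obtain rfl | h := eq_or_ne i (N + 1)
  · rw [Pi.single_eq_same, Pi.single_eq_same, mul_one, one_mul]
  · rw [Pi.single_eq_of_ne h, Pi.single_eq_of_ne h, zero_mul]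

theorem inducedRep_inclusion_cyclicVector {N : ℕ} (b : CH k m N v q) :
    inducedRep v q N (inclusion v q N b) (cyclicVector v q N) =
      inducedMulRight b (cyclicVector v q N) := by
  induction b using generator_induction with
  | algebraMap c =>
    refine inducedModule_ext fun i _ => ?_
    rw [AlgHom.commutes, inducedRep_algebraMap_apply, inducedMulRight_apply, Submodule.coe_smul,
      Pi.smul_apply, Algebra.smul_def]
    exact Algebra.commutes c _
  | generator l hl => exact inducedRep_inclusion_generator_cyclicVector v q hl
  | mul x y hx hy =>
    rw [map_mul, map_mul, Module.End.mul_apply, hy, inducedRep_inducedMulRight, hx]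
    refine inducedModule_ext fun i _ => ?_
    simp only [inducedMulRight_apply, C_mul, mul_assoc]
  | add x y hx hy =>
    rw [map_add, map_add, LinearMap.add_apply, hx, hy]
    refine inducedModule_ext fun i _ => ?_
    simp only [Submodule.coe_add, Pi.add_apply, inducedMulRight_apply, C_add, mul_add]

theorem condExp_mul_inclusion {N : ℕ} (h : CH k m (N + 1) v q) (b : CH k m N v q) :
    condExp v q N (h * inclusion v q N b) = condExp v q N h * b := by
  rw [condExp_apply, map_mul, Module.End.mul_apply, inducedRep_inclusion_cyclicVector,
    inducedRep_inducedMulRight, inducedMulRight_apply, coeff_mul_C, condExp_apply]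

theorem coeff_zero_inducedRep_inclusion {N : ℕ} (b : CH k m N v q)
    (w : inducedModule k (CH k m N v q) m N) :
    ((inducedRep v q N (inclusion v q N b) w).1 N).coeff 0 = b * (w.1 N).coeff 0 := by
  induction b using generator_induction generalizing w with
  | algebraMap c =>
    rw [AlgHom.commutes, inducedRep_algebraMap_apply, Submodule.coe_smul, Pi.smul_apply, coeff_smul,
      Algebra.smul_def]
  | generator l hl =>
    rw [inclusion_generator v q hl]
    obtain ⟨n, rfl⟩ : ∃ n, N = n + 1 := ⟨N - 1, by omega⟩
    rcases l with _ | l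
    · rw [coe_inducedRep_generator_zero, ReductionDatum.inducedX_apply_succ _ _ _ (by omega),
        ReductionDatum.correction_apply, coeff_sub, coeff_C_mul, coeff_smul]
      simp [polynomialDatum]
    · rw [coe_inducedRep_generator_succ v q (by omega), inducedT_apply_of_gt _ (by omega),
        coeff_C_mul]
  | mul x y hx hy => rw [map_mul, map_mul, Module.End.mul_apply, hx, hy, mul_assoc]
  | add x y hx hy =>
    rw [map_add, map_add, LinearMap.add_apply, Submodule.coe_add, Pi.add_apply, coeff_add, hx, hy,
      add_mul]

theorem condExp_inclusion_mul {N : ℕ} (b : CH k m N v q) (h : CH k m (N + 1) v q) :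
    condExp v q N (inclusion v q N b * h) = b * condExp v q N h := by
  rw [condExp_apply, map_mul, Module.End.mul_apply, coeff_zero_inducedRep_inclusion, condExp_apply]

theorem inducedRep_generator_inducedSingle {N j : ℕ} (hj : j < N) {p : (CH k m N v q)[X]}
    (hp : p.degree < m) :
    inducedRep v q N (generator v q (N + 1) (j + 1)) (inducedSingle hj hp) =
      inducedSingle hj.le hp := by
  refine Subtype.ext ?_
  rw [coe_inducedRep_generator_succ v q hj]
  exact inducedT_single_succ j p

end ConditionalExpectation

section JucysMurphy

open Polynomial

variable {k : Type} [Field k] {m : ℕ} {A : Type*} [Ring A] [Algebra k A]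

theorem isUnit_of_mul_eq_smul_one {c : k} (hc : c ≠ 0) {x y : A} (hxy : x * y = c • 1)
    (hyx : y * x = c • 1) : IsUnit x :=
  ⟨⟨x, c⁻¹ • y, by rw [mul_smul_comm, hxy, inv_smul_smul₀ hc],
    by rw [smul_mul_assoc, hyx, inv_smul_smul₀ hc]⟩, rfl⟩

theorem isUnit_of_aeval_eq_zero {f : k[X]} (hf : f.coeff 0 ≠ 0) {x : A} (hx : aeval x f = 0) :
    IsUnit x := by
  have hmul : aeval x f.divX * x = (-f.coeff 0) • 1 := by
    rw [← divX_mul_X_add f, map_add, map_mul, aeval_X, aeval_C,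
      Algebra.algebraMap_eq_smul_one] at hx
    rw [neg_smul]
    exact eq_neg_of_add_eq_zero_left hx
  refine isUnit_of_mul_eq_smul_one (neg_ne_zero.2 hf) ?_ hmul
  rwa [(commute_aeval (Commute.refl x) f.divX).eq]

/-- The Jucys–Murphy elements `L_{j+1} = q^{-j} a_{j+1} ⋯ a_2 a_1 a_2 ⋯ a_{j+1}`, where
`g l = a_{l+1}`. -/
def jucysMurphy (q : k) (g : ℕ → A) : ℕ → A
  | 0 => g 0
  | j + 1 => q⁻¹ • (g (j + 1) * jucysMurphy q g j * g (j + 1))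

theorem map_jucysMurphy {A' : Type*} [Ring A'] [Algebra k A'] (q : k) {φ : A →ₐ[k] A'} {g : ℕ → A}
    {g' : ℕ → A'} {j : ℕ} (hφ : ∀ l ≤ j, φ (g l) = g' l) :
    φ (jucysMurphy q g j) = jucysMurphy q g' j := by
  induction j with
  | zero => exact hφ 0 le_rfl
  | succ j ih =>
    rw [jucysMurphy, map_smul, map_mul, map_mul, ih fun l hl => hφ l (by omega), hφ _ le_rfl,
      jucysMurphy]

variable {v : Fin m → k} {q : k} {N : ℕ} {g : ℕ → A}

theorem commute_jucysMurphy_of_gt (hg : HeckeRelations v q N g) {j l : ℕ} (h : j + 2 ≤ l)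
    (hl : l < N) : Commute (g l) (jucysMurphy q g j) := by
  induction j with
  | zero => exact (hg.commute 0 l h hl).symm
  | succ j ih =>
    have hj : Commute (g l) (g (j + 1)) := (hg.commute _ l h hl).symm
    exact ((hj.mul_right (ih (by omega))).mul_right hj).smul_right _

theorem commute_jucysMurphy_succ (hg : HeckeRelations v q N g) {l : ℕ} (hl : l + 1 < N) :
    Commute (g l) (jucysMurphy q g (l + 1)) := by
  refine Commute.smul_right ?_ _
  rcases l with _ | l
  · have h := hg.braid_four hl
    simpa only [commute_iff_eq, jucysMurphy, zero_add, ← mul_assoc] using h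
  have hcomm := commute_jucysMurphy_of_gt hg (j := l) le_rfl hl
  have hbraid := hg.braid (l + 1) (by omega) hl
  rw [jucysMurphy, mul_smul_comm, smul_mul_assoc]
  refine Commute.smul_right ?_ _
  calc g (l + 1) * (g (l + 2) * (g (l + 1) * jucysMurphy q g l * g (l + 1)) * g (l + 2))
      = (g (l + 1) * g (l + 2) * g (l + 1)) * jucysMurphy q g l * g (l + 1) * g (l + 2) := by
        simp only [mul_assoc]
    _ = g (l + 2) * g (l + 1) * (g (l + 2) * jucysMurphy q g l) * g (l + 1) * g (l + 2) := by
        rw [← hbraid]; simp only [mul_assoc]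
    _ = g (l + 2) * g (l + 1) * jucysMurphy q g l * (g (l + 2) * g (l + 1) * g (l + 2)) := by
        rw [hcomm.eq]; simp only [mul_assoc]
    _ = g (l + 2) * (g (l + 1) * jucysMurphy q g l * g (l + 1)) * g (l + 2) * g (l + 1) := by
        rw [hbraid]; simp only [mul_assoc]

theorem commute_jucysMurphy_of_lt (hg : HeckeRelations v q N g) {j l : ℕ} (h : l < j) (hj : j < N) :
    Commute (g l) (jucysMurphy q g j) := by
  induction j with
  | zero => omega
  | succ j ih =>
    obtain h' | rfl : l < j ∨ l = j := by omega
    · have hlj : Commute (g l) (g (j + 1)) := hg.commute l (j + 1) (by omega) hj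
      exact ((hlj.mul_right (ih h' (by omega))).mul_right hlj).smul_right _
    · exact commute_jucysMurphy_succ hg hj

variable [NeZero q]

theorem isUnit_scaledInvProd (hg : HeckeRelations v q N g) {j : ℕ} (hj : j < N) :
    IsUnit (scaledInvProd q g j) := by
  induction j with
  | zero => exact isUnit_one
  | succ j ih =>
    exact (ih (by omega)).mul (isUnit_of_mul_eq_smul_one (NeZero.ne q)
      (scaledInv_mul hg (by omega) hj) (mul_scaledInv hg (by omega) hj))

theorem isUnit_jucysMurphy (hg : HeckeRelations v q N g) (hv : ∀ j, v j ≠ 0) {j : ℕ} (hj : j < N) :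
    IsUnit (jucysMurphy q g j) := by
  induction j with
  | zero => exact isUnit_of_aeval_eq_zero (coeff_zero_parameterPoly_ne_zero hv) (hg.cyclotomic hj)
  | succ j ih =>
    have hgen : IsUnit (g (j + 1)) := isUnit_of_mul_eq_smul_one (NeZero.ne q)
      (mul_scaledInv hg (by omega) hj) (scaledInv_mul hg (by omega) hj)
    rw [jucysMurphy, Algebra.smul_def]
    exact ((IsUnit.mk0 _ (inv_ne_zero (NeZero.ne q))).map (algebraMap k A)).mul
      ((hgen.mul (ih (by omega))).mul hgen)

end JucysMurphy

section MurphyImage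

variable {k : Type} [Field k] {m : ℕ} {P : Type*} [Ring P] [Algebra k P] {N : ℕ} {G : ℕ → P}

/-- The shape of `L_{j+1} p` in `⨁ i ≤ N, P`, for an element `p` of the summand `j` without top
coefficient. -/
structure IsMurphyImage (q : k) (D : ReductionDatum k N G) (j : ℕ) (p : P) (u : ℕ → P) :
    Prop where
  apply_of_lt : ∀ i < j, u i = 0
  apply_self : u j = D.z * p
  apply_succ : ∀ i, j ≤ i → i < N →
    scaledInvProd q G j * u (i + 1) = -((q - 1) • (D.z * (scaledInvProd q G i * p)))

variable {q : k} {D : ReductionDatum k N G} {p : P}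

theorem isMurphyImage_inducedX_single (hp : D.top p = 0) :
    IsMurphyImage q D 0 p (D.inducedX q (Pi.single 0 p)) where
  apply_of_lt := by simp
  apply_self := by
    rw [D.inducedX_apply_zero, Pi.single_eq_same, D.reducedMul_apply, hp, mul_zero, sub_zero]
  apply_succ i _ hi := by
    rw [D.inducedX_apply_succ _ _ hi, Pi.single_eq_same, Pi.single_eq_of_ne (by omega), mul_zero,
      zero_sub, D.correction_apply, hp, mul_zero, mul_zero, sub_zero, scaledInvProd, one_mul]

theorem IsMurphyImage.inducedT {v : Fin m → k} [NeZero q] (hG : HeckeRelations v q N G) {j : ℕ}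
    (hj : j < N) {u : ℕ → P} (hu : IsMurphyImage q D j p u) :
    IsMurphyImage q D (j + 1) p (q⁻¹ • inducedT q G j u) where
  apply_of_lt i hi := by
    obtain h | rfl : i < j ∨ i = j := by omega
    · rw [Pi.smul_apply, inducedT_apply_of_lt _ h, hu.apply_of_lt i h, mul_zero, smul_zero]
    have hsucc : u (i + 1) = -((q - 1) • (D.z * p)) := by
      rw [← (isUnit_scaledInvProd hG hj).mul_right_inj, hu.apply_succ i le_rfl hj, mul_neg,
        mul_smul_comm, (D.commute_z _).left_comm]
    rw [Pi.smul_apply, inducedT_apply_self, hsucc, hu.apply_self, neg_add_cancel, smul_zero]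
  apply_self := by
    rw [Pi.smul_apply, inducedT_apply_succ, hu.apply_self, inv_smul_smul₀ (NeZero.ne q)]
  apply_succ i hji hi := by
    rw [Pi.smul_apply, inducedT_apply_of_gt _ (by omega), scaledInvProd, mul_smul_comm, mul_assoc,
      ← mul_assoc (scaledInv q G _), scaledInv_mul hG (by omega) (by omega), smul_mul_assoc,
      one_mul, mul_smul_comm, inv_smul_smul₀ (NeZero.ne q), hu.apply_succ i (by omega) hi]

end MurphyImage

section LastMurphy

open Polynomial

variable {k : Type} [Field k] {m : ℕ} (v : Fin m → k) (q : k)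

/-- The Jucys–Murphy element `L_{N+1}` of `H_{N+1}`. -/
def lastMurphy (N : ℕ) : CH k m (N + 1) v q := jucysMurphy q (generator v q (N + 1)) N

/-- The last generator `a_{N+1}` of `H_{N+1}`. -/
def lastGenerator (N : ℕ) : CH k m (N + 1) v q := generator v q (N + 1) N

local notation "ι" => inclusion v q
local notation "L" => lastMurphy v q
local notation "T" => lastGenerator v q

variable [NeZero m] [NeZero q]

local notation "E" => condExp v q

theorem condExp_lastGenerator (N : ℕ) : E (N + 1) (T (N + 1)) = 0 := by
  rw [lastGenerator, condExp_apply, cyclicVector,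
    inducedRep_generator_inducedSingle v q N.lt_succ_self, coe_inducedSingle,
    Pi.single_eq_of_ne (by omega), coeff_zero]

theorem isMurphyImage_inducedRep {N j : ℕ} (hj : j ≤ N) {p : (CH k m N v q)[X]}
    (hp : p.degree < m) (htop : p.coeff (m - 1) = 0) :
    IsMurphyImage q (polynomialDatum (heckeRelations_generator v q N)) j p
      (inducedRep v q N (jucysMurphy q (generator v q (N + 1)) j) (inducedSingle hj hp)).1 := by
  induction j with
  | zero =>
    rw [jucysMurphy, coe_inducedRep_generator_zero, coe_inducedSingle]
    exact isMurphyImage_inducedX_single (by rw [polynomialDatum_top_apply, htop, C_0])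
  | succ j ih =>
    rw [jucysMurphy, map_smul, map_mul, map_mul, LinearMap.smul_apply, Module.End.mul_apply,
      Module.End.mul_apply, inducedRep_generator_inducedSingle v q hj, Submodule.coe_smul,
      coe_inducedRep_generator_succ v q hj]
    exact (ih (by omega)).inducedT (heckeRelations_generator v q N).map_C hj

theorem inducedRep_lastMurphy_inducedSingle {N : ℕ} {p : (CH k m N v q)[X]}
    (hp : p.degree < (m - 1 : ℕ)) :
    inducedRep v q N (L N) (inducedSingle le_rfl (hp.trans_le (by exact_mod_cast m.pred_le))) =
      inducedSingle le_rfl (degree_X_mul_lt hp) := by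
  have hL := isMurphyImage_inducedRep v q (N := N) le_rfl
    (hp.trans_le (by exact_mod_cast m.pred_le)) (coeff_eq_zero_of_degree_lt hp)
  refine inducedModule_ext fun i hi => ?_
  rw [coe_inducedSingle]
  obtain rfl | h := hi.eq_or_lt
  · rw [Pi.single_eq_same]
    exact hL.apply_self
  · rw [Pi.single_eq_of_ne h.ne]
    exact hL.apply_of_lt i h

theorem inducedRep_lastMurphy_pow_cyclicVector (N : ℕ) {s : ℕ} (hs : s < m) :
    inducedRep v q N (L N ^ s) (cyclicVector v q N) =
      inducedSingle le_rfl ((degree_X_pow_le s).trans_lt (by exact_mod_cast hs)) := by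
  induction s with
  | zero => rw [pow_zero, map_one, Module.End.one_apply, cyclicVector]; simp only [pow_zero]
  | succ s ih =>
    rw [pow_succ', map_mul, Module.End.mul_apply, ih (by omega), inducedRep_lastMurphy_inducedSingle
      v q ((degree_X_pow_le s).trans_lt (by norm_cast; omega))]
    simp only [pow_succ']

theorem condExp_lastMurphy_pow (N : ℕ) {s : ℕ} (hs : s < m) :
    E N (L N ^ s) = if s = 0 then 1 else 0 := by
  rw [condExp_apply, inducedRep_lastMurphy_pow_cyclicVector v q N hs, coe_inducedSingle,
    Pi.single_eq_same, coeff_X_pow]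
  simp only [eq_comm]

theorem inducedRep_generator_inclusion {N l : ℕ} (hl : l < N + 1)
    {w : inducedModule k (CH k m N v q) m N}
    {w' : inducedModule k (CH k m (N + 1) v q) m (N + 1)}
    (hw : ∀ i ≤ N, w'.1 i = mapAlgHom (ι N) (w.1 i)) {i : ℕ} (hi : i ≤ N) :
    (inducedRep v q (N + 1) (generator v q (N + 2) l) w').1 i =
      mapAlgHom (ι N) ((inducedRep v q N (generator v q (N + 1) l) w).1 i) := by
  have hmap : ∀ l < N, mapAlgHom (ι N) (C (generator v q N l)) = C (generator v q (N + 1) l) :=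
    fun l hl => by rw [coe_mapAlgHom, map_C]; exact congrArg C (inclusion_generator v q hl)
  rcases l with _ | l
  · rw [coe_inducedRep_generator_zero, coe_inducedRep_generator_zero]
    refine ReductionDatum.inducedX_map _ q N.le_succ hmap ?_ ?_ ?_ ?_ hw hi
    · simp [polynomialDatum]
    · simp [polynomialDatum, Polynomial.map_map]
    · intro hN
      rw [coe_mapAlgHom]
      refine (map_differenceQuotient _ _ _).trans ?_
      rw [inclusion_generator v q hN]
      rfl
    · intro p
      simp [polynomialDatum_top_apply]
  · rw [coe_inducedRep_generator_succ v q (by omega), coe_inducedRep_generator_succ v q (by omega)]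
    exact inducedT_map hmap hw (by omega) hi

theorem inducedRep_inclusion {N : ℕ} (x : CH k m (N + 1) v q)
    {w : inducedModule k (CH k m N v q) m N}
    {w' : inducedModule k (CH k m (N + 1) v q) m (N + 1)}
    (hw : ∀ i ≤ N, w'.1 i = mapAlgHom (ι N) (w.1 i)) {i : ℕ} (hi : i ≤ N) :
    (inducedRep v q (N + 1) (ι (N + 1) x) w').1 i =
      mapAlgHom (ι N) ((inducedRep v q N x w).1 i) := by
  induction x using generator_induction generalizing w w' i with
  | algebraMap c =>
    rw [AlgHom.commutes, inducedRep_algebraMap_apply, inducedRep_algebraMap_apply,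
      Submodule.coe_smul, Submodule.coe_smul, Pi.smul_apply, Pi.smul_apply, map_smul, hw i hi]
  | generator l hl =>
    rw [inclusion_generator v q hl]
    exact inducedRep_generator_inclusion v q hl hw hi
  | mul x y hx hy =>
    rw [map_mul, map_mul, map_mul, Module.End.mul_apply, Module.End.mul_apply]
    exact hx (fun i hi => hy hw hi) hi
  | add x y hx hy =>
    rw [map_add, map_add, map_add, LinearMap.add_apply, LinearMap.add_apply, Submodule.coe_add,
      Submodule.coe_add, Pi.add_apply, Pi.add_apply, map_add, hx hw hi, hy hw hi]

theorem condExp_lastGenerator_mul_inclusion_mul_lastGenerator {N : ℕ} (x : CH k m (N + 1) v q) :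
    E (N + 1) (T (N + 1) * ι (N + 1) x * T (N + 1)) = q • ι N (E N x) := by
  have hw : ∀ i ≤ N, (inducedSingle (k := k) (B := CH k m (N + 1) v q) N.le_succ
      (degree_one_lt (m := m))).1 i = mapAlgHom (ι N) ((cyclicVector v q N).1 i) := fun i hi => by
    rw [cyclicVector, coe_inducedSingle, coe_inducedSingle]
    obtain rfl | h := eq_or_ne i N
    · rw [Pi.single_eq_same, Pi.single_eq_same, map_one]
    · rw [Pi.single_eq_of_ne h, Pi.single_eq_of_ne h, map_zero]
  rw [condExp_apply, lastGenerator, map_mul, map_mul, Module.End.mul_apply, Module.End.mul_apply,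
    cyclicVector, inducedRep_generator_inducedSingle v q N.lt_succ_self,
    coe_inducedRep_generator_succ v q N.lt_succ_self, inducedT_apply_succ, coeff_smul,
    inducedRep_inclusion v q x hw le_rfl, coeff_mapAlgHom_apply, condExp_apply]

end LastMurphy

section Tower

open Polynomial

variable {k : Type} [Field k] {m : ℕ} (v : Fin m → k) (q : k)

local notation "ι" => inclusion v q
local notation "L" => lastMurphy v q
local notation "T" => lastGenerator v q

theorem lastMurphy_succ (N : ℕ) :
    L (N + 1) = q⁻¹ • (T (N + 1) * ι (N + 1) (L N) * T (N + 1)) := by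
  have hL : ι (N + 1) (L N) = jucysMurphy q (generator v q (N + 2)) N :=
    map_jucysMurphy q fun l hl => inclusion_generator v q (by omega)
  rw [hL, lastMurphy, jucysMurphy, lastGenerator]

theorem commute_inclusion_lastMurphy {N : ℕ} (x : CH k m N v q) : Commute (ι N x) (L N) :=
  (commute_of_commute_generator (fun l hl => by
    rw [inclusion_generator v q hl]
    exact (commute_jucysMurphy_of_lt (heckeRelations_generator v q (N + 1)) hl
      N.lt_succ_self).symm) x).symm

theorem commute_inclusion_inclusion_lastGenerator {N : ℕ} (x : CH k m N v q) :
    Commute (ι (N + 1) (ι N x)) (T (N + 1)) :=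
  (commute_of_commute_generator (φ := (ι (N + 1)).comp (ι N)) (fun l hl => by
    rw [AlgHom.comp_apply, inclusion_generator v q hl, inclusion_generator v q (by omega)]
    exact ((heckeRelations_generator v q (N + 2)).commute l (N + 1) (by omega) (by omega)).symm)
    x).symm

theorem lastGenerator_mul_self (N : ℕ) :
    T (N + 1) * T (N + 1) = (q - 1) • T (N + 1) + q • 1 :=
  (heckeRelations_generator v q (N + 2)).quadratic (N + 1) (by omega) (by omega)

theorem lastGenerator_braid (N : ℕ) :
    T (N + 2) * ι (N + 2) (T (N + 1)) * T (N + 2) =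
      ι (N + 2) (T (N + 1)) * T (N + 2) * ι (N + 2) (T (N + 1)) := by
  rw [lastGenerator, lastGenerator, inclusion_generator v q (by omega)]
  exact (heckeRelations_generator v q (N + 3)).braid (N + 1) (by omega) (by omega)

theorem lastGenerator_mul_inclusion_mul_lastGenerator {N : ℕ} (b c : CH k m (N + 1) v q) :
    T (N + 2) * ι (N + 2) (ι (N + 1) b * T (N + 1) * ι (N + 1) c) * T (N + 2) =
      ι (N + 2) (ι (N + 1) b * T (N + 1)) * T (N + 2) * ι (N + 2) (T (N + 1) * ι (N + 1) c) := by
  have hb := (commute_inclusion_inclusion_lastGenerator v q b).eq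
  have hc := (commute_inclusion_inclusion_lastGenerator v q c).eq
  simp only [map_mul]
  calc T (N + 2) * (ι (N + 2) (ι (N + 1) b) * ι (N + 2) (T (N + 1)) * ι (N + 2) (ι (N + 1) c)) *
        T (N + 2)
      = ι (N + 2) (ι (N + 1) b) * (T (N + 2) * ι (N + 2) (T (N + 1)) * T (N + 2)) *
          ι (N + 2) (ι (N + 1) c) := by
        rw [mul_assoc, mul_assoc _ _ (T (N + 2)), hc]
        simp only [← mul_assoc]
        rw [hb]
    _ = _ := by
        rw [lastGenerator_braid]
        simp only [mul_assoc]

/-- The span of the elements `L_{N+1}^s b` with `s < r` and, if `N ≥ 1`, of the elements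
`b a_{N+1} c`, where `b` and `c` run through `H_N`. -/
def murphySpan (N r : ℕ) : Submodule k (CH k m (N + 1) v q) :=
  Submodule.span k ({x | ∃ s < r, ∃ b, x = L N ^ s * ι N b} ∪
    {x | 0 < N ∧ ∃ b c, x = ι N b * T N * ι N c})

variable {v q}

theorem murphySpan_le {N r : ℕ} {S : Submodule k (CH k m (N + 1) v q)}
    (hpow : ∀ s < r, ∀ b, L N ^ s * ι N b ∈ S)
    (hgen : 0 < N → ∀ b c, ι N b * T N * ι N c ∈ S) : murphySpan v q N r ≤ S := by
  refine Submodule.span_le.2 ?_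
  rintro _ (⟨s, hs, b, rfl⟩ | ⟨hN, b, c, rfl⟩)
  exacts [hpow s hs b, hgen hN b c]

theorem lastMurphy_pow_mul_inclusion_mem_murphySpan {N r s : ℕ} (hs : s < r) (b : CH k m N v q) :
    L N ^ s * ι N b ∈ murphySpan v q N r :=
  Submodule.subset_span (Or.inl ⟨s, hs, b, rfl⟩)

theorem inclusion_mul_lastGenerator_mul_inclusion_mem_murphySpan {N : ℕ} (hN : 0 < N) (r : ℕ)
    (b c : CH k m N v q) : ι N b * T N * ι N c ∈ murphySpan v q N r :=
  Submodule.subset_span (Or.inr ⟨hN, b, c, rfl⟩)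

theorem murphySpan_mono {N r r' : ℕ} (h : r ≤ r') : murphySpan v q N r ≤ murphySpan v q N r' :=
  murphySpan_le (fun _ hs b => lastMurphy_pow_mul_inclusion_mem_murphySpan (hs.trans_le h) b)
    fun hN b c => inclusion_mul_lastGenerator_mul_inclusion_mem_murphySpan hN r' b c

theorem lastMurphy_pow_mem_murphySpan (N : ℕ) {r s : ℕ} (hs : s < r) :
    L N ^ s ∈ murphySpan v q N r := by
  simpa using lastMurphy_pow_mul_inclusion_mem_murphySpan hs (1 : CH k m N v q)

theorem lastGenerator_mem_murphySpan (N r : ℕ) : T (N + 1) ∈ murphySpan v q (N + 1) r := by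
  simpa using inclusion_mul_lastGenerator_mul_inclusion_mem_murphySpan N.succ_pos r
    (1 : CH k m (N + 1) v q) 1

theorem one_mem_murphySpan (N : ℕ) {r : ℕ} (hr : 0 < r) : 1 ∈ murphySpan v q N r := by
  simpa using lastMurphy_pow_mem_murphySpan (v := v) (q := q) N hr

theorem inclusion_mul_mem_murphySpan {N r : ℕ} (b : CH k m N v q) {x : CH k m (N + 1) v q}
    (hx : x ∈ murphySpan v q N r) : ι N b * x ∈ murphySpan v q N r := by
  refine murphySpan_le (S := (murphySpan v q N r).comap (LinearMap.mulLeft k (ι N b)))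
    (fun s hs c => ?_) (fun hN c d => ?_) hx
  · rw [Submodule.mem_comap, LinearMap.mulLeft_apply, ← mul_assoc,
      ((commute_inclusion_lastMurphy v q b).pow_right s).eq, mul_assoc, ← map_mul]
    exact lastMurphy_pow_mul_inclusion_mem_murphySpan hs _
  · rw [Submodule.mem_comap, LinearMap.mulLeft_apply, ← mul_assoc, ← mul_assoc, ← map_mul]
    exact inclusion_mul_lastGenerator_mul_inclusion_mem_murphySpan hN r _ _

theorem mul_inclusion_mem_murphySpan {N r : ℕ} {x : CH k m (N + 1) v q}
    (hx : x ∈ murphySpan v q N r) (b : CH k m N v q) : x * ι N b ∈ murphySpan v q N r := by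
  refine murphySpan_le (S := (murphySpan v q N r).comap (LinearMap.mulRight k (ι N b)))
    (fun s hs c => ?_) (fun hN c d => ?_) hx
  · rw [Submodule.mem_comap, LinearMap.mulRight_apply, mul_assoc, ← map_mul]
    exact lastMurphy_pow_mul_inclusion_mem_murphySpan hs _
  · rw [Submodule.mem_comap, LinearMap.mulRight_apply, mul_assoc, ← map_mul]
    exact inclusion_mul_lastGenerator_mul_inclusion_mem_murphySpan hN r _ _

theorem lastMurphy_zero_pow_mem_murphySpan : L 0 ^ m ∈ murphySpan v q 0 m := by
  have hroot : aeval (L 0) (parameterPoly v) = 0 :=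
    (heckeRelations_generator v q 1).cyclotomic Nat.one_pos
  have hdeg : (X ^ m %ₘ parameterPoly v).degree < m :=
    (degree_modByMonic_lt _ (monic_parameterPoly v)).trans_eq (degree_parameterPoly v)
  have hpow : L 0 ^ m = aeval (L 0) (X ^ m %ₘ parameterPoly v) := by
    rw [aeval_modByMonic_eq_self_of_root hroot, map_pow, aeval_X]
  rw [hpow, aeval_def, eval₂_eq_sum]
  refine Submodule.sum_mem _ fun s hs => ?_
  beta_reduce
  rw [← Algebra.smul_def]
  refine Submodule.smul_mem _ _ (lastMurphy_pow_mem_murphySpan 0 ?_)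
  exact_mod_cast (le_degree_of_mem_supp s hs).trans_lt hdeg

theorem lastMurphy_zero_mul_mem_murphySpan {x : CH k m 1 v q} (hx : x ∈ murphySpan v q 0 m) :
    L 0 * x ∈ murphySpan v q 0 m := by
  refine murphySpan_le (S := (murphySpan v q 0 m).comap (LinearMap.mulLeft k (L 0)))
    (fun s hs b => ?_) (fun h => absurd h (lt_irrefl 0)) hx
  rw [Submodule.mem_comap, LinearMap.mulLeft_apply, ← mul_assoc, ← pow_succ']
  refine mul_inclusion_mem_murphySpan ?_ b
  obtain h | h : s + 1 < m ∨ s + 1 = m := by omega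
  · exact lastMurphy_pow_mem_murphySpan 0 h
  · rw [h]
    exact lastMurphy_zero_pow_mem_murphySpan

variable [NeZero q]

variable (v q) in
theorem lastGenerator_mul_lastMurphy (N : ℕ) :
    T (N + 1) * L (N + 1) = ι (N + 1) (L N) * T (N + 1) + (q - 1) • L (N + 1) := by
  rw [lastMurphy_succ, mul_smul_comm, ← mul_assoc, ← mul_assoc, lastGenerator_mul_self, add_mul,
    add_mul, smul_add]
  simp only [smul_mul_assoc, one_mul, inv_smul_smul₀ (NeZero.ne q), smul_comm q⁻¹ (q - 1)]
  exact add_comm _ _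

variable (v q) in
theorem lastMurphy_mul_lastGenerator (N : ℕ) :
    L (N + 1) * T (N + 1) = T (N + 1) * ι (N + 1) (L N) + (q - 1) • L (N + 1) := by
  rw [lastMurphy_succ, smul_mul_assoc, mul_assoc _ _ (T (N + 1)), lastGenerator_mul_self, mul_add,
    smul_add]
  simp only [mul_smul_comm, mul_one, inv_smul_smul₀ (NeZero.ne q), smul_comm q⁻¹ (q - 1)]
  exact add_comm _ _

theorem mul_lastMurphy_mem_murphySpan {N r : ℕ} (hr : 0 < r) {x : CH k m (N + 2) v q}
    (hx : x ∈ murphySpan v q (N + 1) r) :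
    x * L (N + 1) ∈ murphySpan v q (N + 1) (r + 1) := by
  refine murphySpan_le (S := (murphySpan v q (N + 1) (r + 1)).comap
    (LinearMap.mulRight k (L (N + 1)))) (fun s hs b => ?_) (fun _ b c => ?_) hx
  · rw [Submodule.mem_comap, LinearMap.mulRight_apply, mul_assoc,
      (commute_inclusion_lastMurphy v q b).eq, ← mul_assoc, ← pow_succ]
    exact lastMurphy_pow_mul_inclusion_mem_murphySpan (by omega) b
  · rw [Submodule.mem_comap, LinearMap.mulRight_apply, mul_assoc,
      (commute_inclusion_lastMurphy v q c).eq, ← mul_assoc, mul_assoc (ι (N + 1) b),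
      lastGenerator_mul_lastMurphy]
    refine mul_inclusion_mem_murphySpan (inclusion_mul_mem_murphySpan b (add_mem
      (inclusion_mul_mem_murphySpan _ (lastGenerator_mem_murphySpan N _))
      (Submodule.smul_mem _ _ ?_))) c
    simpa using lastMurphy_pow_mem_murphySpan (v := v) (q := q) (N + 1) (show 1 < r + 1 by omega)

theorem lastGenerator_mul_lastMurphy_pow_mem_murphySpan (N s : ℕ) :
    T (N + 1) * L (N + 1) ^ s ∈ murphySpan v q (N + 1) (s + 1) := by
  induction s with
  | zero => rw [pow_zero, mul_one]; exact lastGenerator_mem_murphySpan N _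
  | succ s ih =>
    rw [pow_succ, ← mul_assoc]
    exact mul_lastMurphy_mem_murphySpan s.succ_pos ih

theorem lastGenerator_mul_inclusion_lastMurphy_pow_mul_lastGenerator_mem_murphySpan (N s : ℕ) :
    T (N + 1) * ι (N + 1) (L N ^ s) * T (N + 1) ∈ murphySpan v q (N + 1) (s + 1) := by
  induction s with
  | zero =>
    rw [pow_zero, map_one, mul_one, lastGenerator_mul_self]
    exact add_mem (Submodule.smul_mem _ _ (lastGenerator_mem_murphySpan N _))
      (Submodule.smul_mem _ _ (one_mem_murphySpan _ Nat.one_pos))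
  | succ s ih =>
    have hstep : T (N + 1) * ι (N + 1) (L N ^ (s + 1)) * T (N + 1) =
        T (N + 1) * ι (N + 1) (L N ^ s) * T (N + 1) * L (N + 1) -
          (q - 1) • (T (N + 1) * L (N + 1) * ι (N + 1) (L N ^ s)) := by
      rw [pow_succ, map_mul, ← mul_assoc, mul_assoc _ _ (T (N + 1)),
        eq_sub_of_add_eq (lastGenerator_mul_lastMurphy v q N).symm, mul_sub, mul_smul_comm,
        mul_assoc _ _ (L (N + 1)), (commute_inclusion_lastMurphy v q _).eq, ← mul_assoc,
        ← mul_assoc]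
    rw [hstep]
    have hTL := lastGenerator_mul_lastMurphy_pow_mem_murphySpan (v := v) (q := q) N 1
    rw [pow_one] at hTL
    exact sub_mem (mul_lastMurphy_mem_murphySpan s.succ_pos ih) (Submodule.smul_mem _ _
      (mul_inclusion_mem_murphySpan (murphySpan_mono (by omega) hTL) _))

theorem lastGenerator_mul_inclusion_mul_lastGenerator_mem_murphySpan {N r : ℕ}
    {x : CH k m (N + 1) v q} (hx : x ∈ murphySpan v q N r) :
    T (N + 1) * ι (N + 1) x * T (N + 1) ∈ murphySpan v q (N + 1) r := by
  let conj : CH k m (N + 1) v q →ₗ[k] CH k m (N + 2) v q :=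
    LinearMap.mulRight k (T (N + 1)) ∘ₗ LinearMap.mulLeft k (T (N + 1)) ∘ₗ (ι (N + 1)).toLinearMap
  have hconj : ∀ y, conj y = T (N + 1) * ι (N + 1) y * T (N + 1) := fun _ => rfl
  refine murphySpan_le (S := (murphySpan v q (N + 1) r).comap conj) (fun s hs b => ?_)
    (fun hN b c => ?_) hx
  · rw [Submodule.mem_comap, hconj, map_mul, mul_assoc, mul_assoc,
      (commute_inclusion_inclusion_lastGenerator v q b).eq, ← mul_assoc, ← mul_assoc]
    exact mul_inclusion_mem_murphySpan (murphySpan_mono hs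
      (lastGenerator_mul_inclusion_lastMurphy_pow_mul_lastGenerator_mem_murphySpan N s)) _
  · obtain ⟨N, rfl⟩ : ∃ n, N = n + 1 := ⟨N - 1, by omega⟩
    rw [Submodule.mem_comap, hconj, lastGenerator_mul_inclusion_mul_lastGenerator]
    exact inclusion_mul_lastGenerator_mul_inclusion_mem_murphySpan (N + 1).succ_pos r _ _

theorem lastGenerator_mul_mem_murphySpan {N : ℕ} (htop : murphySpan v q N m = ⊤)
    {x : CH k m (N + 2) v q} (hx : x ∈ murphySpan v q (N + 1) m) :
    T (N + 1) * x ∈ murphySpan v q (N + 1) m := by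
  refine murphySpan_le (S := (murphySpan v q (N + 1) m).comap (LinearMap.mulLeft k (T (N + 1))))
    (fun s hs b => ?_) (fun _ b c => ?_) hx
  · rw [Submodule.mem_comap, LinearMap.mulLeft_apply, ← mul_assoc]
    exact mul_inclusion_mem_murphySpan (murphySpan_mono hs
      (lastGenerator_mul_lastMurphy_pow_mem_murphySpan N s)) b
  · rw [Submodule.mem_comap, LinearMap.mulLeft_apply, ← mul_assoc, ← mul_assoc]
    exact mul_inclusion_mem_murphySpan
      (lastGenerator_mul_inclusion_mul_lastGenerator_mem_murphySpan (htop ▸ Submodule.mem_top)) c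

variable [NeZero m]

variable (v q) in
theorem murphySpan_eq_top (N : ℕ) : murphySpan v q N m = ⊤ := by
  refine (Submodule.eq_top_iff').2 ?_
  induction N with
  | zero =>
    refine mem_of_generator_mul_mem (one_mem_murphySpan 0 (NeZero.pos m)) fun l hl x hx => ?_
    obtain rfl : l = 0 := by omega
    exact lastMurphy_zero_mul_mem_murphySpan hx
  | succ N ih =>
    refine mem_of_generator_mul_mem (one_mem_murphySpan _ (NeZero.pos m)) fun l hl x hx => ?_
    obtain h | rfl : l < N + 1 ∨ l = N + 1 := by omega
    · rw [← inclusion_generator v q h]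
      exact inclusion_mul_mem_murphySpan _ hx
    · exact lastGenerator_mul_mem_murphySpan (Submodule.eq_top_iff'.2 ih) hx

theorem linearMap_ext_lastMurphy_lastGenerator {N : ℕ} {M : Type*} [AddCommGroup M] [Module k M]
    {φ ψ : CH k m (N + 1) v q →ₗ[k] M}
    (hpow : ∀ s < m, ∀ b, φ (L N ^ s * ι N b) = ψ (L N ^ s * ι N b))
    (hgen : 0 < N → ∀ b c, φ (ι N b * T N * ι N c) = ψ (ι N b * T N * ι N c)) : φ = ψ := by
  have h : murphySpan v q N m ≤ LinearMap.eqLocus φ ψ := murphySpan_le hpow hgen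
  rw [murphySpan_eq_top] at h
  exact LinearMap.eqLocus_eq_top.1 (top_le_iff.1 h)

end Tower

section RankOne

variable {k : Type*} [CommRing k] {A B : Type*} [Ring A] [Algebra k A] [Ring B] [Algebra k B]
  (ι : B →ₐ[k] A) (E : A →ₗ[k] B)

/-- The operator `x ↦ E(x a) b` of `A`, where `E : A → B` and `B` maps to `A` by `ι`. -/
def rankOne (a b : A) : Module.End k A :=
  LinearMap.mulRight k b ∘ₗ ι.toLinearMap ∘ₗ E ∘ₗ LinearMap.mulRight k a

theorem rankOne_apply (a b x : A) : rankOne ι E a b x = ι (E (x * a)) * b := rfl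

/-- The span of the operators `x ↦ E(x a) b`. It contains the identity if and only if there are
finitely many pairs `(a, b)` of dual elements, that is with `x = ∑ E(x a) b` for all `x`. -/
def rankOneSpan : Submodule k (Module.End k A) :=
  Submodule.span k (Set.range fun ab : A × A => rankOne ι E ab.1 ab.2)

variable {ι E}

theorem rankOne_mem_rankOneSpan (a b : A) : rankOne ι E a b ∈ rankOneSpan ι E :=
  Submodule.subset_span ⟨(a, b), rfl⟩

theorem apply_eq_zero_of_mem_rankOneSpan {φ : Module.End k A} (hφ : φ ∈ rankOneSpan ι E) {x : A}
    (hx : ∀ a, E (x * a) = 0) : φ x = 0 := by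
  suffices h : rankOneSpan ι E ≤ LinearMap.ker (LinearMap.applyₗ (R := k) x) from h hφ
  refine Submodule.span_le.2 ?_
  rintro _ ⟨⟨a, b⟩, rfl⟩
  simp [rankOne_apply, hx]

theorem mul_mem_rankOneSpan (hleft : ∀ b a, E (ι b * a) = b * E a)
    (hright : ∀ a b, E (a * ι b) = E a * b) {φ ψ : Module.End k A} (hφ : φ ∈ rankOneSpan ι E)
    (hψ : ψ ∈ rankOneSpan ι E) : φ * ψ ∈ rankOneSpan ι E := by
  have h := Submodule.mul_mem_mul hφ hψ
  rw [rankOneSpan, Submodule.span_mul_span] at h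
  refine Submodule.span_le.2 ?_ h
  rintro _ ⟨_, ⟨⟨a, b⟩, rfl⟩, _, ⟨⟨c, d⟩, rfl⟩, rfl⟩
  have hcomp : rankOne ι E a b * rankOne ι E c d = rankOne ι E (c * ι (E (d * a))) b := by
    ext x
    rw [Module.End.mul_apply, rankOne_apply, rankOne_apply, rankOne_apply, mul_assoc, hleft,
      ← mul_assoc, hright]
  simpa only [SetLike.mem_coe, hcomp] using rankOne_mem_rankOneSpan _ b

/-- As `1 - (φ + ψ - φ ψ) = (1 - φ) (1 - ψ)`, this operator fixes whatever `ψ` fixes, and whatever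
`φ` fixes and `ψ` annihilates. -/
theorem add_sub_mul_mem_rankOneSpan (hleft : ∀ b a, E (ι b * a) = b * E a)
    (hright : ∀ a b, E (a * ι b) = E a * b) {φ ψ : Module.End k A} (hφ : φ ∈ rankOneSpan ι E)
    (hψ : ψ ∈ rankOneSpan ι E) : φ + ψ - φ * ψ ∈ rankOneSpan ι E :=
  sub_mem (add_mem hφ hψ) (mul_mem_rankOneSpan hleft hright hφ hψ)

end RankOne

section Trace

variable {k : Type} [Field k] {m : ℕ} (v : Fin m → k) (q : k)

local notation "ι" => inclusion v q
local notation "L" => lastMurphy v q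
local notation "T" => lastGenerator v q

theorem heckeRelations_zero : HeckeRelations v q 0 fun _ => (0 : k) where
  cyclotomic h := by omega
  quadratic _ _ h := by omega
  braid_four h := by omega
  commute _ _ _ h := by omega
  braid _ _ h := by omega

theorem algebraMap_surjective_zero :
    Function.Surjective (algebraMap k (CH k m 0 v q)) := fun x => by
  rw [← RingHom.mem_range]
  induction x using generator_induction with
  | algebraMap c => exact ⟨c, rfl⟩
  | generator l hl => omega
  | mul a b ha hb => exact mul_mem ha hb
  | add a b ha hb => exact add_mem ha hb

variable [NeZero m] [NeZero q]

local notation "E" => condExp v q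

theorem condExp_lastMurphy_pow_mul_lastGenerator (N : ℕ) {s : ℕ} (hs : s < m) :
    E (N + 1) (L (N + 1) ^ s * T (N + 1)) = 0 := by
  induction s with
  | zero => rw [pow_zero, one_mul, condExp_lastGenerator]
  | succ s ih =>
    rw [pow_succ, mul_assoc, lastMurphy_mul_lastGenerator, mul_add, mul_smul_comm, ← pow_succ,
      ← mul_assoc, map_add, map_smul, condExp_mul_inclusion, ih (by omega),
      condExp_lastMurphy_pow v q _ hs, if_neg s.succ_ne_zero, zero_mul, smul_zero, add_zero]

theorem condExp_lastGenerator_mul_lastMurphy_pow (N : ℕ) {s : ℕ} (hs : s < m) :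
    E (N + 1) (T (N + 1) * L (N + 1) ^ s) = 0 := by
  induction s with
  | zero => rw [pow_zero, mul_one, condExp_lastGenerator]
  | succ s ih =>
    rw [pow_succ', ← mul_assoc, lastGenerator_mul_lastMurphy, add_mul, smul_mul_assoc, ← pow_succ',
      mul_assoc, map_add, map_smul, condExp_inclusion_mul, ih (by omega),
      condExp_lastMurphy_pow v q _ hs, if_neg s.succ_ne_zero, mul_zero, smul_zero, add_zero]

/-- The trace form of `H_N`: the composite of the conditional expectations down to `H_0 = k`. -/
def trace : ∀ N : ℕ, CH k m N v q →ₗ[k] k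
  | 0 => (heckeRelations_zero v q).lift.toLinearMap
  | N + 1 => trace N ∘ₗ E N

theorem trace_succ (N : ℕ) (x : CH k m (N + 1) v q) :
    trace v q (N + 1) x = trace v q N (E N x) := rfl

theorem trace_mul_lastGenerator (N : ℕ) (x : CH k m (N + 2) v q) :
    trace v q (N + 2) (x * T (N + 1)) = trace v q (N + 2) (T (N + 1) * x) := by
  refine LinearMap.congr_fun (f := trace v q (N + 2) ∘ₗ LinearMap.mulRight k (T (N + 1)))
    (g := trace v q (N + 2) ∘ₗ LinearMap.mulLeft k (T (N + 1)))
    (linearMap_ext_lastMurphy_lastGenerator (fun s hs b => ?_) fun _ b c => ?_) x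
  all_goals simp only [LinearMap.comp_apply, LinearMap.mulRight_apply, LinearMap.mulLeft_apply]
  · have hleft : E (N + 1) (L (N + 1) ^ s * ι (N + 1) b * T (N + 1)) = 0 := by
      rw [← ((commute_inclusion_lastMurphy v q b).pow_right s).eq, mul_assoc,
        condExp_inclusion_mul, condExp_lastMurphy_pow_mul_lastGenerator v q N hs, mul_zero]
    have hright : E (N + 1) (T (N + 1) * (L (N + 1) ^ s * ι (N + 1) b)) = 0 := by
      rw [← mul_assoc, condExp_mul_inclusion, condExp_lastGenerator_mul_lastMurphy_pow v q N hs,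
        zero_mul]
    rw [trace_succ v q (N + 1), trace_succ v q (N + 1), hleft, hright]
  · have hleft : E (N + 1) (ι (N + 1) b * T (N + 1) * ι (N + 1) c * T (N + 1)) =
        q • (b * ι N (E N c)) := by
      rw [mul_assoc, mul_assoc, condExp_inclusion_mul, ← mul_assoc,
        condExp_lastGenerator_mul_inclusion_mul_lastGenerator, mul_smul_comm]
    have hright : E (N + 1) (T (N + 1) * (ι (N + 1) b * T (N + 1) * ι (N + 1) c)) =
        q • (ι N (E N b) * c) := by
      rw [← mul_assoc, condExp_mul_inclusion, ← mul_assoc,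
        condExp_lastGenerator_mul_inclusion_mul_lastGenerator, smul_mul_assoc]
    rw [trace_succ v q (N + 1), trace_succ v q (N + 1), hleft, hright, map_smul, map_smul,
      trace_succ v q N, trace_succ v q N, condExp_mul_inclusion, condExp_inclusion_mul]

theorem trace_mul_generator {N : ℕ}
    (ih : ∀ x y : CH k m N v q, trace v q N (x * y) = trace v q N (y * x)) {l : ℕ}
    (hl : l < N + 1) (x : CH k m (N + 1) v q) :
    trace v q (N + 1) (x * generator v q (N + 1) l) =
      trace v q (N + 1) (generator v q (N + 1) l * x) := by
  obtain h | rfl : l < N ∨ l = N := by omega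
  · rw [← inclusion_generator v q h, trace_succ, trace_succ, condExp_mul_inclusion,
      condExp_inclusion_mul, ih]
  rcases l with _ | N
  · have hcomm : Commute (generator v q 1 0) x :=
      commute_of_commute_generator (φ := AlgHom.id k _) (fun l hl => by
        obtain rfl : l = 0 := by omega
        exact Commute.refl _) x
    rw [hcomm.eq]
  · exact trace_mul_lastGenerator v q N x

theorem trace_mul_comm (N : ℕ) (x y : CH k m N v q) :
    trace v q N (x * y) = trace v q N (y * x) := by
  induction N with
  | zero =>
    obtain ⟨c, rfl⟩ := algebraMap_surjective_zero v q y
    rw [Algebra.commutes c x]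
  | succ N ih =>
    induction y using generator_induction generalizing x with
    | algebraMap c => rw [Algebra.commutes c x]
    | generator l hl => exact trace_mul_generator v q ih hl x
    | mul a b ha hb => rw [← mul_assoc, hb, ← mul_assoc, ha, ← mul_assoc]
    | add a b ha hb => rw [add_mul, mul_add, map_add, map_add, ha, hb]

/-- Extends the operator `x ↦ E_N(x a) b` of `H_{N+1}` to the operator
`c a_{N+2} x ↦ c a_{N+2} E_N(x a) b` of `H_{N+2}`, by zero on the `L_{N+2}^s H_{N+1}`. -/
def extendRankOne {N : ℕ} (a b : CH k m (N + 1) v q) : Module.End k (CH k m (N + 2) v q) :=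
  q⁻¹ • rankOne (ι (N + 1)) (E (N + 1)) (ι (N + 1) a * T (N + 1)) (T (N + 1) * ι (N + 1) b)

theorem extendRankOne_apply_lastMurphy_pow {N s : ℕ} (hs : s < m) (a b c : CH k m (N + 1) v q) :
    extendRankOne v q a b (L (N + 1) ^ s * ι (N + 1) c) = 0 := by
  rw [extendRankOne, LinearMap.smul_apply, rankOne_apply, mul_assoc, ← mul_assoc (ι (N + 1) c),
    ← map_mul, ← mul_assoc (L (N + 1) ^ s),
    ← ((commute_inclusion_lastMurphy v q (c * a)).pow_right s).eq, mul_assoc,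
    condExp_inclusion_mul, condExp_lastMurphy_pow_mul_lastGenerator v q N hs, mul_zero, map_zero,
    zero_mul, smul_zero]

theorem extendRankOne_apply_lastGenerator {N : ℕ} (a b c d : CH k m (N + 1) v q) :
    extendRankOne v q a b (ι (N + 1) c * T (N + 1) * ι (N + 1) d) =
      ι (N + 1) c * T (N + 1) * ι (N + 1) (rankOne (ι N) (E N) a b d) := by
  have hE : E (N + 1) (ι (N + 1) c * T (N + 1) * ι (N + 1) d * (ι (N + 1) a * T (N + 1))) =
      q • (c * ι N (E N (d * a))) := by
    rw [← mul_smul_comm, ← condExp_lastGenerator_mul_inclusion_mul_lastGenerator,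
      ← condExp_inclusion_mul, map_mul (ι (N + 1)) d]
    simp only [mul_assoc]
  rw [extendRankOne, LinearMap.smul_apply, rankOne_apply, rankOne_apply, hE, map_smul,
    smul_mul_assoc, inv_smul_smul₀ (NeZero.ne q), map_mul (ι (N + 1)), map_mul (ι (N + 1)),
    mul_assoc, ← mul_assoc _ (T _), (commute_inclusion_inclusion_lastGenerator v q _).eq]
  simp only [mul_assoc]

theorem exists_extension_mem_rankOneSpan {N : ℕ} {φ : Module.End k (CH k m (N + 1) v q)}
    (hφ : φ ∈ rankOneSpan (ι N) (E N)) :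
    ∃ ψ ∈ rankOneSpan (ι (N + 1)) (E (N + 1)),
      (∀ s < m, ∀ b, ψ (L (N + 1) ^ s * ι (N + 1) b) = 0) ∧
      ∀ b c, ψ (ι (N + 1) b * T (N + 1) * ι (N + 1) c) =
        ι (N + 1) b * T (N + 1) * ι (N + 1) (φ c) := by
  induction hφ using Submodule.span_induction with
  | mem φ h =>
    obtain ⟨⟨a, b⟩, rfl⟩ := h
    exact ⟨extendRankOne v q a b, Submodule.smul_mem _ _ (rankOne_mem_rankOneSpan _ _),
      fun s hs c => extendRankOne_apply_lastMurphy_pow v q hs a b c,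
      extendRankOne_apply_lastGenerator v q a b⟩
  | zero => exact ⟨0, zero_mem _, by simp, by simp⟩
  | add φ φ' _ _ h h' =>
    obtain ⟨ψ, hψ, hpow, hgen⟩ := h
    obtain ⟨ψ', hψ', hpow', hgen'⟩ := h'
    refine ⟨ψ + ψ', add_mem hψ hψ', fun s hs b => ?_, fun b c => ?_⟩
    · rw [LinearMap.add_apply, hpow s hs, hpow' s hs, add_zero]
    · rw [LinearMap.add_apply, hgen, hgen', LinearMap.add_apply, map_add, mul_add]
  | smul r φ _ h =>
    obtain ⟨ψ, hψ, hpow, hgen⟩ := h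
    refine ⟨r • ψ, Submodule.smul_mem _ _ hψ, fun s hs b => ?_, fun b c => ?_⟩
    · rw [LinearMap.smul_apply, hpow s hs, smul_zero]
    · rw [LinearMap.smul_apply, hgen, LinearMap.smul_apply, map_smul, mul_smul_comm]

theorem rankOne_lastMurphy_pow {N r s : ℕ} (hrs : r ≤ s) (hs : s < m)
    (u : (CH k m (N + 1) v q)ˣ) (hu : u = L N) (b : CH k m N v q) :
    rankOne (ι N) (E N) ↑(u⁻¹ ^ r) (L N ^ r) (L N ^ s * ι N b) =
      if s = r then L N ^ s * ι N b else 0 := by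
  obtain ⟨d, rfl⟩ := Nat.exists_eq_add_of_le' hrs
  have hpow : L N ^ (d + r) * ↑(u⁻¹ ^ r) = L N ^ d := by
    rw [← hu, inv_pow, pow_add, mul_assoc, ← Units.val_pow_eq_pow_val u r, Units.mul_inv, mul_one]
  have hcomm := (commute_inclusion_lastMurphy v q b).pow_right
  rw [rankOne_apply, ← (hcomm _).eq, mul_assoc, hpow, condExp_inclusion_mul,
    condExp_lastMurphy_pow v q N (by omega)]
  obtain rfl | hd := eq_or_ne d 0
  · rw [if_pos rfl, if_pos (zero_add r), mul_one, zero_add]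
  · rw [if_neg hd, if_neg (by omega), mul_zero, map_zero, zero_mul]

theorem exists_mem_rankOneSpan_apply_lastMurphy_pow (hv : ∀ j, v j ≠ 0) (N : ℕ) {r : ℕ}
    (hr : r ≤ m) : ∃ φ ∈ rankOneSpan (ι N) (E N), ∀ s, r ≤ s → s < m → ∀ b,
      φ (L N ^ s * ι N b) = L N ^ s * ι N b := by
  obtain ⟨u, hu⟩ : IsUnit (L N) :=
    isUnit_jucysMurphy (heckeRelations_generator v q (N + 1)) hv N.lt_succ_self
  induction hr using Nat.decreasingInduction with
  | self => exact ⟨0, zero_mem _, fun s h h' => by omega⟩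
  | of_succ r _ ih =>
    obtain ⟨φ, hφ, hfix⟩ := ih
    refine ⟨_, add_sub_mul_mem_rankOneSpan (condExp_inclusion_mul v q) (condExp_mul_inclusion v q)
      hφ (rankOne_mem_rankOneSpan ↑(u⁻¹ ^ r) (L N ^ r)), fun s hrs hs b => ?_⟩
    rw [LinearMap.sub_apply, LinearMap.add_apply, Module.End.mul_apply,
      rankOne_lastMurphy_pow v q hrs hs u hu]
    split_ifs with h
    · rw [add_sub_cancel_left]
    · rw [hfix s (by omega) hs, map_zero, add_zero, sub_zero]

theorem one_mem_rankOneSpan (hv : ∀ j, v j ≠ 0) (N : ℕ) : 1 ∈ rankOneSpan (ι N) (E N) := by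
  induction N with
  | zero =>
    obtain ⟨φ, hφ, hfix⟩ :=
      exists_mem_rankOneSpan_apply_lastMurphy_pow v q hv 0 m.zero_le
    have hone : φ = 1 := linearMap_ext_lastMurphy_lastGenerator
      (fun s hs b => hfix s s.zero_le hs b) fun h => absurd h (lt_irrefl 0)
    rwa [← hone]
  | succ N ih =>
    obtain ⟨φ, hφ, hfix⟩ :=
      exists_mem_rankOneSpan_apply_lastMurphy_pow v q hv (N + 1) m.zero_le
    obtain ⟨ψ, hψ, hpow, hgen⟩ := exists_extension_mem_rankOneSpan v q ih
    have hone : φ + ψ - φ * ψ = 1 := linearMap_ext_lastMurphy_lastGenerator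
      (fun s hs b => by
        rw [LinearMap.sub_apply, LinearMap.add_apply, Module.End.mul_apply, hpow s hs, map_zero,
          sub_zero, add_zero, hfix s s.zero_le hs, Module.End.one_apply])
      fun _ b c => by
        rw [LinearMap.sub_apply, LinearMap.add_apply, Module.End.mul_apply, hgen,
          Module.End.one_apply, Module.End.one_apply, add_sub_cancel_left]
    rw [← hone]
    exact add_sub_mul_mem_rankOneSpan (condExp_inclusion_mul v q) (condExp_mul_inclusion v q) hφ hψ

theorem trace_nondegenerate (hv : ∀ j, v j ≠ 0) (N : ℕ) {x : CH k m N v q}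
    (hx : ∀ y, trace v q N (x * y) = 0) : x = 0 := by
  induction N with
  | zero =>
    obtain ⟨c, rfl⟩ := algebraMap_surjective_zero v q x
    have hc : trace v q 0 (algebraMap k _ c) = c := AlgHom.commutes _ c
    rw [← hc, ← mul_one (algebraMap k _ c), hx 1, map_zero]
  | succ N ih =>
    refine apply_eq_zero_of_mem_rankOneSpan (one_mem_rankOneSpan v q hv N) fun a => ih fun b => ?_
    rw [← condExp_mul_inclusion, ← trace_succ, mul_assoc]
    exact hx _

end Trace

/-- **Malle–Mathas.**  If the parameters `v_1,…,v_m` are all invertible,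
then the cyclotomic Hecke algebra `H_n(v_1,…,v_m;q)` is a symmetric algebra:  there is a
`k`-linear trace map `tr : H_n → k` with `tr (x y) = tr (y x)` for which the bilinear form
`(x, y) ↦ tr (x y)` is nondegenerate. -/
theorem symmetric_algebra [NeZero m] [NeZero n] (hq : q ≠ 0) (hv : ∀ j, v j ≠ 0) :
    ∃ tr : CH k m n v q →ₗ[k] k,
      (∀ x y : CH k m n v q, tr (x * y) = tr (y * x)) ∧
      (∀ x : CH k m n v q, (∀ y : CH k m n v q, tr (x * y) = 0) → x = 0) ∧
      (∀ y : CH k m n v q, (∀ x : CH k m n v q, tr (x * y) = 0) → y = 0) := by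
  have : NeZero q := ⟨hq⟩
  refine ⟨trace v q n, trace_mul_comm v q n, fun x hx => trace_nondegenerate v q hv n hx,
    fun y hy => trace_nondegenerate v q hv n fun x => ?_⟩
  rw [trace_mul_comm, hy]

end Cyclo
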